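/- arXiv:1703.09378 — 5 statements merged into one kernel-verified Lean document; each statement's English description precedes it below -/
import Mathlib

section
/- For all integers k ≥ 3 and 2 ≤ t ≤ k−1, the graph C_{2k−1}^{ct} obtained from a cycle C of length 2k−1 by adding a chord between two vertices at distance t on C satisfies cc_k(C_{2k−1}^{ct}) = 2k − t. -/
open SimpleGraph

/-- `c` is a `k`-color connecting edge-coloring of `G`: between every pair of distinct
vertices there is a path whose edges use at least `k` different colors. -/
def SimpleGraph.IsKColorConnecting {V : Type*} (G : SimpleGraph V) (k : ℕ)
    (c : Sym2 V → ℕ) : Prop :=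
  ∀ u v : V, u ≠ v → ∃ p : G.Walk u v, p.IsPath ∧ k ≤ (p.edges.map c).toFinset.card

/-- `G` is `k`-color connectable: it admits a `k`-color connecting coloring. -/
def SimpleGraph.KColorConnectable {V : Type*} (G : SimpleGraph V) (k : ℕ) : Prop :=
  ∃ c : Sym2 V → ℕ, G.IsKColorConnecting k c

/-- The `k`-color connection number `cc_k(G)`: the minimum number of colors used on the
edges of `G` by a `k`-color connecting coloring. -/
noncomputable def SimpleGraph.ccConn {V : Type*} (G : SimpleGraph V) (k : ℕ) : ℕ :=
  sInf {n : ℕ | ∃ c : Sym2 V → ℕ, G.IsKColorConnecting k c ∧ (c '' G.edgeSet).ncard = n}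

/-- The cycle of length `n` together with one extra chord joining vertex `0` and
vertex `t` (which are at distance `t` along the cycle when `t ≤ n - t`). -/
def chordedCycle (n t : ℕ) (h0 : 0 < n) (ht : t < n) : SimpleGraph (Fin n) :=
  cycleGraph n ⊔ SimpleGraph.fromEdgeSet {s((⟨0, h0⟩ : Fin n), (⟨t, ht⟩ : Fin n))}

/-! Number the vertices of the cycle by `0, …, n - 1`, `n = 2 * k - 1`, so that the chord joins `0`
and `t`.

Lower bound. If two vertices of the long arc `t, …, n` are at distance `k` along that arc or its
complement, then one of the two ways round the cycle between them has only `k - 1` edges, and any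
path uses only the vertices of one of the two ways. The only path with `k` colors is therefore the
`k`-edge arc, which must be rainbow. So the long arc is rainbow, the short one is too, and an edge
of the long arc sharing its color with an edge of the short arc is one of the middle edges
`k, …, k + t - 2`; there are only `t - 1` of these, so some edge of the short arc has a color not
on the long arc.

Upper bound. Give the `n - t` edges of the long arc and the last edge of the short arc different
colors, use the color of the latter for the chord too, and let the other edges of the short arc
repeat the colors of the middle edges in reverse order. The reversal is what makes the paths
through the chord, from the inside of the short arc to the inside of the long one, collect `k`
colors.
-/

section Walks

variable {V : Type*} {G : SimpleGraph V} {u v x y w : V} {I : Set V} {p : G.Walk u v}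

theorem isPath_append_cons {q : G.Walk y v} {p : G.Walk u x} (hp : p.IsPath) (hq : q.IsPath)
    (h : G.Adj x y) (hpq : p.support.Disjoint q.support) : (p.append (.cons h q)).IsPath := by
  rw [Walk.isPath_def, Walk.support_append, Walk.support_cons, List.tail_cons]
  exact hp.support_nodup.append hq.support_nodup hpq

theorem getVert_mem_of_le (hp : p.IsPath)
    (hI : ∀ a ∈ I, ∀ b, G.Adj a b → b ∈ I ∨ b = u ∨ b = v) {i j : ℕ} (hi : p.getVert i ∈ I)
    (hij : i ≤ j) (hj : j < p.length) : p.getVert j ∈ I := by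
  induction j, hij using Nat.le_induction with
  | base => exact hi
  | succ j _ ih =>
    rcases hI _ (ih (by lia)) _ (p.adj_getVert_succ (by lia)) with h | h | h
    · exact h
    · simp [hp.getVert_eq_start_iff hj.le] at h
    · exact absurd ((hp.getVert_eq_end_iff hj.le).1 h) hj.ne

theorem support_subset_or_disjoint (hp : p.IsPath)
    (hI : ∀ a ∈ I, ∀ b, G.Adj a b → b ∈ I ∨ b = u ∨ b = v) :
    (∀ w ∈ p.support, w ∈ I ∨ w = u ∨ w = v) ∨ ∀ w ∈ p.support, w ∉ I := by
  by_contra! ⟨⟨w, hw, hwI, hwu, hwv⟩, z, hz, hzI⟩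
  obtain ⟨j, rfl, hj⟩ := Walk.mem_support_iff_exists_getVert.1 hw
  obtain ⟨i, rfl, hi⟩ := Walk.mem_support_iff_exists_getVert.1 hz
  have hj0 : j ≠ 0 := by rintro rfl; simp at hwu
  have hjl : j ≠ p.length := by rintro rfl; simp at hwv
  rcases le_total i j with hij | hji
  · exact hwI (getVert_mem_of_le hp hI hzI hij (by lia))
  · have hrev := getVert_mem_of_le (p := p.reverse) (i := p.length - i) (j := p.length - j)
      hp.reverse (fun a ha b hab => (hI a ha b hab).imp_right Or.symm)
      (by rwa [Walk.getVert_reverse, Nat.sub_sub_self hi]) (by lia)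
      (by rw [Walk.length_reverse]; lia)
    rw [Walk.getVert_reverse, Nat.sub_sub_self hj] at hrev
    exact hwI hrev

theorem mem_edges_of_unique_adj_start (huv : u ≠ v)
    (h : ∀ b ∈ p.support, G.Adj u b → b = x) : s(u, x) ∈ p.edges := by
  have hnil : ¬p.Nil := Walk.not_nil_of_ne huv
  rw [← h p.snd (p.getVert_mem_support 1) (p.adj_snd hnil)]
  exact p.mk_start_snd_mem_edges hnil

theorem mem_edges_of_adj_pair (hp : p.IsPath) (hw : w ∈ p.support) (hwu : w ≠ u) (hwv : w ≠ v)
    (h : ∀ b ∈ p.support, G.Adj w b → b = x ∨ b = y) :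
    s(w, x) ∈ p.edges ∧ s(w, y) ∈ p.edges := by
  obtain ⟨i, rfl, hi⟩ := Walk.mem_support_iff_exists_getVert.1 hw
  have hi0 : i ≠ 0 := by rintro rfl; simp at hwu
  have hil : i ≠ p.length := by rintro rfl; simp at hwv
  obtain ⟨a, b, hab, hN⟩ := Set.ncard_eq_two.1
    (hp.ncard_neighborSet_toSubgraph_internal_eq_two hi0 (by lia))
  have ha : s(p.getVert i, a) ∈ p.edges := p.mem_edges_toSubgraph.1 (hN.ge (by simp))
  have hb : s(p.getVert i, b) ∈ p.edges := p.mem_edges_toSubgraph.1 (hN.ge (by simp))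
  have hax := h a (p.snd_mem_support_of_mem_edges ha) (p.adj_of_mem_edges ha)
  have hbx := h b (p.snd_mem_support_of_mem_edges hb) (p.adj_of_mem_edges hb)
  grind

theorem card_support_eq_length_add_one [DecidableEq V] (hp : p.IsPath) :
    p.support.toFinset.card = p.length + 1 := by
  rw [List.toFinset_card_of_nodup hp.support_nodup, Walk.length_support]

end Walks

theorem injOn_of_length_le_card_toFinset_map {α β : Type*} [DecidableEq β] {f : α → β}
    {l : List α} (h : l.length ≤ (l.map f).toFinset.card) : Set.InjOn f {a | a ∈ l} := by
  have hnodup : (l.map f).Nodup := by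
    rw [← Multiset.coe_nodup, ← Multiset.toFinset_card_eq_card_iff_nodup]
    exact le_antisymm (Multiset.toFinset_card_le _) (by simpa using h)
  exact fun a ha b hb hab => List.inj_on_of_nodup_map hnodup ha hb hab

section RainbowArcs

variable {α : Type*} {f : ℕ → α} {t k : ℕ}

/-- `f`, regarded as a coloring of the edges of a cycle of length `n` (the edge `{j, j + 1}` has
color `f j`, with `j` read modulo `n`), takes distinct values on each run of `k` consecutive edges
whose two ends both lie on the arc `t, t + 1, …, n`. The second alternative in the hypothesis
describes the runs through the vertex `0`, which end in `s + k - n`. -/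
def RainbowArcs (n t k : ℕ) (f : ℕ → α) : Prop :=
  ∀ s ∈ Set.Icc t n, (s + k ≤ n ∨ t + n ≤ s + k) → Set.InjOn f (Set.Ico s (s + k))

theorem injOn_Ico_of_rainbowArcs (hf : RainbowArcs (2 * k - 1) t k f)
    (hper : ∀ j, f (j + (2 * k - 1)) = f j) (htk : t < k) :
    Set.InjOn f (Set.Ico t (2 * k - 1)) := by
  intro i hi j hj hij
  wlog! hle : i ≤ j generalizing i j
  · exact (this hj hi hij.symm hle.le).symm
  simp only [Set.mem_Ico] at hi hj
  by_cases hd : j < i + k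
  · exact hf (min i (k - 1)) ⟨by lia, by lia⟩ (.inl (by lia)) ⟨by lia, by lia⟩ ⟨by lia, by lia⟩ hij
  · have := hf j ⟨by lia, by lia⟩ (.inr (by lia)) ⟨by lia, by lia⟩ ⟨by lia, by lia⟩
      ((hper i).trans hij)
    lia

theorem injOn_Iio_of_rainbowArcs (hf : RainbowArcs (2 * k - 1) t k f)
    (hper : ∀ j, f (j + (2 * k - 1)) = f j) (htk : t < k) : Set.InjOn f (Set.Iio t) := by
  intro i hi j hj hij
  simp only [Set.mem_Iio] at hi hj
  have := hf (2 * k - 1) ⟨by lia, by lia⟩ (.inr (by lia)) ⟨by lia, by lia⟩ ⟨by lia, by lia⟩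
    ((hper i).trans (hij.trans (hper j).symm))
  lia

theorem mem_Ico_of_rainbowArcs_of_eq (hf : RainbowArcs (2 * k - 1) t k f)
    (hper : ∀ j, f (j + (2 * k - 1)) = f j) (htk : t < k) {i j : ℕ} (hi : i < t)
    (hj : j ∈ Set.Ico t (2 * k - 1)) (hij : f i = f j) : j ∈ Set.Ico k (k + t - 1) := by
  by_contra hout
  simp only [Set.mem_Ico] at hj hout
  rcases lt_or_ge j k with hjk | hkj
  · have := hf (2 * k - 1) ⟨by lia, by lia⟩ (.inr (by lia)) ⟨by lia, by lia⟩ ⟨by lia, by lia⟩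
      ((hper i).trans (hij.trans (hper j).symm))
    lia
  · have := hf j ⟨by lia, by lia⟩ (.inr (by lia)) ⟨by lia, by lia⟩ ⟨by lia, by lia⟩
      ((hper i).trans hij)
    lia

theorem le_card_image_range_of_rainbowArcs [DecidableEq α] (hf : RainbowArcs (2 * k - 1) t k f)
    (hper : ∀ j, f (j + (2 * k - 1)) = f j) (ht0 : 0 < t) (htk : t < k) :
    2 * k - t ≤ ((Finset.range (2 * k - 1)).image f).card := by
  have hlong : ((Finset.Ico t (2 * k - 1)).image f).card = 2 * k - 1 - t := by
    rw [Finset.card_image_of_injOn (by simpa using injOn_Ico_of_rainbowArcs hf hper htk),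
      Nat.card_Ico]
  have hshort : ((Finset.range t).image f).card = t := by
    rw [Finset.card_image_of_injOn (by simpa using injOn_Iio_of_rainbowArcs hf hper htk),
      Finset.card_range]
  obtain ⟨i, hi, hnew⟩ : ∃ i < t, f i ∉ (Finset.Ico t (2 * k - 1)).image f := by
    by_contra! hall
    have hsub : (Finset.range t).image f ⊆ (Finset.Ico k (k + t - 1)).image f := by
      intro _ hx
      obtain ⟨i, hi, rfl⟩ := Finset.mem_image.1 hx
      rw [Finset.mem_range] at hi
      obtain ⟨j, hj, hji⟩ := Finset.mem_image.1 (hall i hi)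
      refine Finset.mem_image.2 ⟨j, ?_, hji⟩
      simpa using mem_Ico_of_rainbowArcs_of_eq hf hper htk hi (by simpa using hj) hji.symm
    have hcard := (Finset.card_le_card hsub).trans Finset.card_image_le
    rw [hshort, Nat.card_Ico] at hcard
    lia
  calc 2 * k - t = (insert (f i) ((Finset.Ico t (2 * k - 1)).image f)).card := by
        rw [Finset.card_insert_of_notMem hnew]
        lia
    _ ≤ _ := by
        refine Finset.card_le_card (Finset.insert_subset ?_ (Finset.image_subset_image ?_))
        · exact Finset.mem_image_of_mem f (Finset.mem_range.2 (by lia))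
        · intro j hj
          simp only [Finset.mem_Ico, Finset.mem_range] at hj ⊢
          exact hj.2

end RainbowArcs

section Cycle

/-- The edge `{j, j + 1}` of the cycle on `Fin n`, with `j` read modulo `n`. -/
def cycleEdge (n : ℕ) [NeZero n] (j : ℕ) : Sym2 (Fin n) :=
  s(Fin.ofNat n j, Fin.ofNat n (j + 1))

/-- The vertices `a, a + 1, …, b` of the cycle on `Fin n`, read modulo `n`; an arc running through
the vertex `0` is given by endpoints `a < n ≤ b`. -/
def arc (n : ℕ) [NeZero n] (a b : ℕ) : Finset (Fin n) :=
  (Finset.Icc a b).image (Fin.ofNat n)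

variable {n : ℕ} [NeZero n] {a b i j : ℕ}

theorem finOfNat_add_self (j : ℕ) : Fin.ofNat n (j + n) = Fin.ofNat n j :=
  Fin.ext (Nat.add_mod_right j n)

theorem finOfNat_succ (j : ℕ) : Fin.ofNat n (j + 1) = Fin.ofNat n j + 1 := by
  simp [Fin.ext_iff, Fin.val_add]

theorem finOfNat_inj_of_mem_Ico (hi : i ∈ Set.Ico a (a + n)) (hj : j ∈ Set.Ico a (a + n)) :
    Fin.ofNat n i = Fin.ofNat n j ↔ i = j := by
  refine ⟨fun h => ?_, congrArg _⟩
  have hmod : i ≡ j [MOD n] := congrArg Fin.val h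
  simp only [Set.mem_Ico] at hi hj
  exact Nat.ModEq.eq_of_abs_lt hmod (by rw [abs_lt]; lia)

theorem finOfNat_inj_of_lt (hi : i < n) (hj : j < n) : Fin.ofNat n i = Fin.ofNat n j ↔ i = j :=
  finOfNat_inj_of_mem_Ico (a := 0) (by simpa) (by simpa)

theorem mem_arc {w : Fin n} : w ∈ arc n a b ↔ ∃ j, a ≤ j ∧ j ≤ b ∧ Fin.ofNat n j = w := by
  simp [arc, and_assoc]

theorem card_arc_le : (arc n a b).card ≤ b + 1 - a :=
  Finset.card_image_le.trans_eq (Nat.card_Icc a b)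

theorem cycleEdge_add_self (j : ℕ) : cycleEdge n (j + n) = cycleEdge n j := by
  rw [cycleEdge, add_right_comm, finOfNat_add_self, finOfNat_add_self, cycleEdge]

theorem cycleEdge_val_ofNat (j : ℕ) : cycleEdge n (Fin.ofNat n j).val = cycleEdge n j := by
  rw [cycleEdge, finOfNat_succ, Fin.ofNat_val_eq_self, ← finOfNat_succ, cycleEdge]

theorem cycleEdge_injective (hn : 3 ≤ n) : Function.Injective fun j : Fin n => cycleEdge n j := by
  intro i j h
  simp only [cycleEdge, finOfNat_succ, Fin.ofNat_val_eq_self, Sym2.eq_iff] at h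
  obtain ⟨hij, -⟩ | ⟨hij, hji⟩ := h
  · exact hij
  · rw [← Fin.ofNat_val_eq_self i, hij, Fin.ofNat_val_eq_self] at hji
    have hj : Fin.ofNat n (j.val + 1 + 1) = Fin.ofNat n j.val := by
      rw [finOfNat_succ, finOfNat_succ, Fin.ofNat_val_eq_self, hji]
    have := (finOfNat_inj_of_mem_Ico (a := j.val) ⟨by lia, by lia⟩ ⟨by lia, by lia⟩).1 hj
    lia

theorem injOn_cycleEdge_Ico (hn : 3 ≤ n) :
    Set.InjOn (cycleEdge n) (Set.Ico a (a + n)) := by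
  intro i hi j hj hij
  rw [← cycleEdge_val_ofNat i, ← cycleEdge_val_ofNat j] at hij
  exact (finOfNat_inj_of_mem_Ico hi hj).1 (cycleEdge_injective hn hij)

theorem cycleGraph_adj_iff_add_one_eq (hn : 2 ≤ n) {x y : Fin n} :
    (cycleGraph n).Adj x y ↔ x + 1 = y ∨ y + 1 = x := by
  obtain ⟨m, rfl⟩ := Nat.exists_eq_add_of_le' hn
  rw [cycleGraph_adj, sub_eq_iff_eq_add', sub_eq_iff_eq_add']
  grind

theorem cycleGraph_adj_ofNat_succ (hn : 2 ≤ n) (j : ℕ) :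
    (cycleGraph n).Adj (Fin.ofNat n j) (Fin.ofNat n (j + 1)) :=
  (cycleGraph_adj_iff_add_one_eq hn).2 (.inl (finOfNat_succ j).symm)

theorem cycleGraph_adj_ofNat_iff (hi : i ∈ Set.Icc a b) (hj : j ∈ Set.Icc a b)
    (hb : b + 1 < a + n) :
    (cycleGraph n).Adj (Fin.ofNat n i) (Fin.ofNat n j) ↔ i + 1 = j ∨ j + 1 = i := by
  simp only [Set.mem_Icc] at hi hj
  rw [cycleGraph_adj_iff_add_one_eq (by lia), ← finOfNat_succ, ← finOfNat_succ,
    finOfNat_inj_of_mem_Ico (a := a) ⟨by lia, by lia⟩ ⟨by lia, by lia⟩,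
    finOfNat_inj_of_mem_Ico (a := a) ⟨by lia, by lia⟩ ⟨by lia, by lia⟩]

theorem exists_isPath_arc {G : SimpleGraph (Fin n)} (hG : cycleGraph n ≤ G) (hab : a ≤ b)
    (hb : b < a + n) : ∃ p : G.Walk (Fin.ofNat n a) (Fin.ofNat n b), p.IsPath ∧
      (∀ w ∈ p.support, w ∈ arc n a b) ∧ ∀ j ∈ Set.Ico a b, cycleEdge n j ∈ p.edges := by
  induction b, hab using Nat.le_induction with
  | base => exact ⟨.nil, .nil, by simp [arc], by simp⟩
  | succ b hab ih =>
    obtain ⟨p, hp, hsupp, hedges⟩ := ih (by lia)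
    have hadj := hG (cycleGraph_adj_ofNat_succ (by lia) b)
    refine ⟨p.concat hadj, hp.concat (fun hmem => ?_) hadj, fun w hw => ?_, fun j hj => ?_⟩
    · obtain ⟨j, haj, hjb, hj⟩ := mem_arc.1 (hsupp _ hmem)
      have := (finOfNat_inj_of_mem_Ico (a := a) ⟨by lia, by lia⟩ ⟨by lia, by lia⟩).1 hj
      lia
    · rw [Walk.support_concat, List.mem_append, List.mem_singleton] at hw
      rcases hw with hw | rfl
      · obtain ⟨j, haj, hjb, rfl⟩ := mem_arc.1 (hsupp _ hw)
        exact mem_arc.2 ⟨j, haj, by lia, rfl⟩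
      · exact mem_arc.2 ⟨b + 1, by lia, le_rfl, rfl⟩
    · rw [Walk.edges_concat, List.concat_eq_append, List.mem_append, List.mem_singleton]
      rcases Nat.lt_succ_iff_lt_or_eq.1 hj.2 with hjb | rfl
      · exact .inl (hedges j ⟨hj.1, hjb⟩)
      · exact .inr rfl

theorem length_le_of_support_subset_arc {G : SimpleGraph (Fin n)} {u v : Fin n} {p : G.Walk u v}
    (hp : p.IsPath) (h : ∀ w ∈ p.support, w ∈ arc n a b) : p.length ≤ b - a := by
  have hsub : p.support.toFinset ⊆ arc n a b := by simpa [Finset.subset_iff] using h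
  have hcard := Finset.card_le_card hsub
  rw [card_support_eq_length_add_one hp] at hcard
  have := card_arc_le (n := n) (a := a) (b := b)
  lia

end Cycle

section ChordedCycle

variable {n t : ℕ} [NeZero n] {ht : t < n} {a b i j k u v : ℕ}

theorem exists_finOfNat_mem_Ico (a : ℕ) (w : Fin n) :
    ∃ j ∈ Set.Ico a (a + n), Fin.ofNat n j = w := by
  have hw : w.val ∈ (Finset.Ico a (a + n)).image (· % n) := by
    rw [Nat.image_Ico_mod, Finset.mem_range]
    exact w.isLt
  obtain ⟨j, hj, hjw⟩ := Finset.mem_image.1 hw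
  exact ⟨j, Finset.mem_Ico.1 hj, Fin.ext hjw⟩

theorem chordedCycle_adj_iff {x y : Fin n} : (chordedCycle n t (NeZero.pos n) ht).Adj x y ↔
    (cycleGraph n).Adj x y ∨ s(x, y) = s(Fin.ofNat n 0, Fin.ofNat n t) ∧ x ≠ y := by
  have h0 : (⟨0, NeZero.pos n⟩ : Fin n) = Fin.ofNat n 0 := Fin.ext (Nat.zero_mod n).symm
  have h1 : (⟨t, ht⟩ : Fin n) = Fin.ofNat n t := Fin.ext (Nat.mod_eq_of_lt ht).symm
  rw [chordedCycle, sup_adj, fromEdgeSet_adj, h0, h1, Set.mem_singleton_iff]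

theorem cycleGraph_adj_of_chordedCycle_adj {x y : Fin n}
    (h : (chordedCycle n t (NeZero.pos n) ht).Adj x y) (hx0 : x ≠ Fin.ofNat n 0)
    (hxt : x ≠ Fin.ofNat n t) : (cycleGraph n).Adj x y := by
  refine (chordedCycle_adj_iff.1 h).resolve_right fun ⟨hxy, _⟩ => ?_
  rcases Sym2.mem_iff.1 (hxy ▸ Sym2.mem_mk_left x y) with hx | hx
  exacts [hx0 hx, hxt hx]

theorem finOfNat_ne_chord_ends_of_mem_Ioo (hj : j ∈ Set.Ioo t n) :
    Fin.ofNat n j ≠ Fin.ofNat n 0 ∧ Fin.ofNat n j ≠ Fin.ofNat n t := by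
  simp only [Set.mem_Ioo] at hj
  rw [Ne, Ne, finOfNat_inj_of_lt (by lia) (by lia), finOfNat_inj_of_lt (by lia) (by lia)]
  lia

theorem finOfNat_mem_image_Ioo_or_eq_of_adj (htu : t ≤ u) (hvn : v ≤ n) (hj : j ∈ Set.Ioo u v)
    {w : Fin n} (hw : (chordedCycle n t (NeZero.pos n) ht).Adj (Fin.ofNat n j) w) :
    w ∈ Fin.ofNat n '' Set.Ioo u v ∨ w = Fin.ofNat n u ∨ w = Fin.ofNat n v := by
  simp only [Set.mem_Ioo] at hj
  obtain ⟨h0, h1⟩ := finOfNat_ne_chord_ends_of_mem_Ioo (n := n) (t := t) (j := j) ⟨by lia, by lia⟩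
  have hadj := cycleGraph_adj_of_chordedCycle_adj hw h0 h1
  obtain ⟨i, rfl⟩ := Nat.exists_eq_add_of_le' (show 1 ≤ j by lia)
  rw [cycleGraph_adj_iff_add_one_eq (by lia), ← finOfNat_succ, finOfNat_succ i,
    add_left_inj] at hadj
  rcases hadj with rfl | rfl
  · rcases eq_or_ne (i + 1 + 1) v with rfl | hv
    · exact .inr (.inr rfl)
    · exact .inl ⟨i + 1 + 1, ⟨by lia, by lia⟩, rfl⟩
  · rcases eq_or_ne i u with rfl | hu
    · exact .inr (.inl rfl)
    · exact .inl ⟨i, ⟨by lia, by lia⟩, rfl⟩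

theorem support_subset_arc_or_arc (htu : t ≤ u) (huv : u ≤ v) (hvn : v ≤ n)
    {p : (chordedCycle n t (NeZero.pos n) ht).Walk (Fin.ofNat n u) (Fin.ofNat n v)}
    (hp : p.IsPath) :
    (∀ w ∈ p.support, w ∈ arc n u v) ∨ ∀ w ∈ p.support, w ∈ arc n v (u + n) := by
  have hI : ∀ x ∈ Fin.ofNat n '' Set.Ioo u v, ∀ w,
      (chordedCycle n t (NeZero.pos n) ht).Adj x w →
        w ∈ Fin.ofNat n '' Set.Ioo u v ∨ w = Fin.ofNat n u ∨ w = Fin.ofNat n v := by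
    rintro _ ⟨j, hj, rfl⟩ w hw
    exact finOfNat_mem_image_Ioo_or_eq_of_adj htu hvn hj hw
  refine (support_subset_or_disjoint hp hI).imp (fun h w hw => ?_) fun h w hw => ?_
  · rcases h w hw with ⟨j, hj, rfl⟩ | rfl | rfl
    · exact mem_arc.2 ⟨j, hj.1.le, hj.2.le, rfl⟩
    · exact mem_arc.2 ⟨u, le_rfl, huv, rfl⟩
    · exact mem_arc.2 ⟨v, huv, le_rfl, rfl⟩
  · obtain ⟨j, ⟨huj, hjn⟩, rfl⟩ := exists_finOfNat_mem_Ico u w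
    rcases eq_or_ne u j with rfl | hne
    · exact mem_arc.2 ⟨u + n, by lia, le_rfl, finOfNat_add_self u⟩
    · exact mem_arc.2 ⟨j, not_lt.1 fun hjv => h _ hw ⟨j, ⟨by lia, hjv⟩, rfl⟩, hjn.le, rfl⟩

theorem not_chord_end_or_succ_not_chord_end (ht2 : 2 ≤ t) (htn : t + 2 ≤ n) (j : ℕ) :
    (Fin.ofNat n j ≠ Fin.ofNat n 0 ∧ Fin.ofNat n j ≠ Fin.ofNat n t) ∨
      Fin.ofNat n (j + 1) ≠ Fin.ofNat n 0 ∧ Fin.ofNat n (j + 1) ≠ Fin.ofNat n t := by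
  refine or_iff_not_imp_left.2 fun h => ?_
  have hj : Fin.ofNat n j = Fin.ofNat n 0 ∨ Fin.ofNat n j = Fin.ofNat n t := by tauto
  rcases hj with hj | hj <;>
  · rw [finOfNat_succ, hj, ← finOfNat_succ, Ne, Ne, finOfNat_inj_of_lt (by lia) (by lia),
      finOfNat_inj_of_lt (by lia) (by lia)]
    lia

theorem eq_of_adj_of_mem_arc (hi : i ∈ Set.Icc a b) (hb : b + 1 < a + n)
    (hi0 : Fin.ofNat n i ≠ Fin.ofNat n 0) (hit : Fin.ofNat n i ≠ Fin.ofNat n t) {w : Fin n}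
    (hw : w ∈ arc n a b) (hadj : (chordedCycle n t (NeZero.pos n) ht).Adj (Fin.ofNat n i) w) :
    ∃ j ∈ Set.Icc a b, (i + 1 = j ∨ j + 1 = i) ∧ Fin.ofNat n j = w := by
  obtain ⟨j, haj, hjb, rfl⟩ := mem_arc.1 hw
  exact ⟨j, ⟨haj, hjb⟩, (cycleGraph_adj_ofNat_iff hi ⟨haj, hjb⟩ hb).1
    (cycleGraph_adj_of_chordedCycle_adj hadj hi0 hit), rfl⟩

theorem cycleEdge_mem_edges_of_ne_chord_ends (hb : b + 1 < a + n)
    {p : (chordedCycle n t (NeZero.pos n) ht).Walk (Fin.ofNat n a) (Fin.ofNat n b)}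
    (hp : p.IsPath) (hsupp : ∀ w, w ∈ p.support ↔ w ∈ arc n a b)
    (hi0 : Fin.ofNat n i ≠ Fin.ofNat n 0) (hit : Fin.ofNat n i ≠ Fin.ofNat n t)
    (hj : j ∈ Set.Ico a b) (hij : i = j ∨ i = j + 1) : cycleEdge n j ∈ p.edges := by
  simp only [Set.mem_Ico] at hj
  have hi : a ≤ i ∧ i ≤ b := by lia
  have hne : ∀ m ∈ Set.Icc a b, m ≠ i → Fin.ofNat n i ≠ Fin.ofNat n m := by
    rintro m ⟨ham, hmb⟩ hmi
    rw [Ne, finOfNat_inj_of_mem_Ico (a := a) ⟨by lia, by lia⟩ ⟨by lia, by lia⟩]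
    exact hmi.symm
  have hnbr : ∀ w ∈ p.support, (chordedCycle n t (NeZero.pos n) ht).Adj (Fin.ofNat n i) w →
      ∃ m ∈ Set.Icc a b, (i + 1 = m ∨ m + 1 = i) ∧ Fin.ofNat n m = w := fun w hw hadj =>
    eq_of_adj_of_mem_arc hi hb hi0 hit ((hsupp w).1 hw) hadj
  rcases eq_or_ne i a with rfl | hia
  · obtain rfl : j = i := by lia
    refine mem_edges_of_unique_adj_start (hne b ⟨by lia, by lia⟩ (by lia)) fun w hw hadj => ?_
    obtain ⟨m, hm, hmi, rfl⟩ := hnbr w hw hadj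
    rw [show m = j + 1 by grind]
  rcases eq_or_ne i b with rfl | hib
  · obtain rfl : i = j + 1 := by lia
    rw [cycleEdge, Sym2.eq_swap, ← List.mem_reverse, ← Walk.edges_reverse]
    refine mem_edges_of_unique_adj_start (hne a ⟨by lia, by lia⟩ (by lia)) fun w hw hadj => ?_
    obtain ⟨m, hm, hmi, rfl⟩ := hnbr w (by simpa using hw) hadj
    rw [show m = j by grind]
  · obtain ⟨m, rfl⟩ := Nat.exists_eq_add_of_le' (show 1 ≤ i by lia)
    have hmem := mem_edges_of_adj_pair (x := Fin.ofNat n m) (y := Fin.ofNat n (m + 2)) hp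
      ((hsupp _).2 (mem_arc.2 ⟨m + 1, hi.1, hi.2, rfl⟩)) (hne a ⟨by lia, by lia⟩ (by lia))
      (hne b ⟨by lia, by lia⟩ (by lia)) (fun w hw hadj => by
        obtain ⟨l, -, hl | hl, rfl⟩ := hnbr w hw hadj
        · exact .inr (by rw [← hl])
        · exact .inl (by rw [Nat.succ_injective hl]))
    rcases hij with rfl | hij
    · exact hmem.2
    · obtain rfl : m = j := Nat.succ_injective hij
      rw [cycleEdge, Sym2.eq_swap]
      exact hmem.1

theorem cycleEdge_mem_edges_of_support_eq_arc (ht2 : 2 ≤ t) (htn : t + 2 ≤ n)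
    (hb : b + 1 < a + n)
    {p : (chordedCycle n t (NeZero.pos n) ht).Walk (Fin.ofNat n a) (Fin.ofNat n b)}
    (hp : p.IsPath) (hsupp : ∀ w, w ∈ p.support ↔ w ∈ arc n a b) (hj : j ∈ Set.Ico a b) :
    cycleEdge n j ∈ p.edges := by
  simp only [Set.mem_Ico] at hj
  rcases not_chord_end_or_succ_not_chord_end ht2 htn j with ⟨h0, h1⟩ | ⟨h0, h1⟩
  · exact cycleEdge_mem_edges_of_ne_chord_ends hb hp hsupp h0 h1 hj (.inl rfl)
  · exact cycleEdge_mem_edges_of_ne_chord_ends hb hp hsupp h0 h1 hj (.inr rfl)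

theorem injOn_of_support_subset_arc (ht2 : 2 ≤ t) (htn : t + 2 ≤ n) (hkn : k + 1 < n)
    {c : Sym2 (Fin n) → ℕ} {y : Fin n} (hy : Fin.ofNat n (a + k) = y)
    {p : (chordedCycle n t (NeZero.pos n) ht).Walk (Fin.ofNat n a) y} (hp : p.IsPath)
    (hc : k ≤ (p.edges.map c).toFinset.card) (hsupp : ∀ w ∈ p.support, w ∈ arc n a (a + k)) :
    Set.InjOn (fun j => c (cycleEdge n j)) (Set.Ico a (a + k)) := by
  subst hy
  have hle : p.edges.length ≤ k := by
    simpa using length_le_of_support_subset_arc hp hsupp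
  have hinj := injOn_of_length_le_card_toFinset_map (hle.trans hc)
  have hlen : k ≤ p.length := by
    simpa using hc.trans (List.toFinset_card_le _)
  have hsub : p.support.toFinset ⊆ arc n a (a + k) := by simpa [Finset.subset_iff] using hsupp
  have heq : p.support.toFinset = arc n a (a + k) := by
    refine Finset.eq_of_subset_of_card_le hsub (card_arc_le.trans ?_)
    rw [card_support_eq_length_add_one hp]
    lia
  have hedges : Set.MapsTo (cycleEdge n) (Set.Ico a (a + k)) {e | e ∈ p.edges} := fun j hj =>
    cycleEdge_mem_edges_of_support_eq_arc ht2 htn (by lia) hp (fun w => by simp [← heq]) hj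
  exact hinj.comp ((injOn_cycleEdge_Ico (by lia)).mono (Set.Ico_subset_Ico_right (by lia))) hedges

theorem not_support_subset_arc_of_le_card {G : SimpleGraph (Fin n)} {c : Sym2 (Fin n) → ℕ}
    {x y : Fin n} {p : G.Walk x y} (hp : p.IsPath)
    (hc : k ≤ (p.edges.map c).toFinset.card) (hab : b - a < k) :
    ¬∀ w ∈ p.support, w ∈ arc n a b := by
  intro h
  have hcard : (p.edges.map c).toFinset.card ≤ p.length := by
    simpa using (p.edges.map c).toFinset_card_le
  have := length_le_of_support_subset_arc hp h
  lia

theorem rainbowArcs_of_isKColorConnecting (ht2 : 2 ≤ t) (htn : t + 2 ≤ n) (hkn : k + 1 < n)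
    (hnk : n < 2 * k) {c : Sym2 (Fin n) → ℕ}
    (hc : (chordedCycle n t (NeZero.pos n) ht).IsKColorConnecting k c) :
    RainbowArcs n t k fun j => c (cycleEdge n j) := by
  rintro s ⟨hts, hsn⟩ (hs | hs)
  · have hne : Fin.ofNat n s ≠ Fin.ofNat n (s + k) := by
      rw [Ne, finOfNat_inj_of_mem_Ico (a := s) ⟨by lia, by lia⟩ ⟨by lia, by lia⟩]
      lia
    obtain ⟨p, hp, hpc⟩ := hc _ _ hne
    rcases support_subset_arc_or_arc hts (by lia) hs hp with h | h
    · exact injOn_of_support_subset_arc ht2 htn hkn rfl hp hpc h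
    · exact absurd h (not_support_subset_arc_of_le_card hp hpc (by lia))
  · obtain ⟨m, hm⟩ : ∃ m, s + k = m + n := Nat.exists_eq_add_of_le' (by lia)
    have hne : Fin.ofNat n m ≠ Fin.ofNat n s := by
      rw [Ne, finOfNat_inj_of_mem_Ico (a := m) ⟨by lia, by lia⟩ ⟨by lia, by lia⟩]
      lia
    obtain ⟨p, hp, hpc⟩ := hc _ _ hne
    rcases support_subset_arc_or_arc (by lia) (by lia) hsn hp with h | h
    · exact absurd h (not_support_subset_arc_of_le_card hp hpc (by lia))
    · exact injOn_of_support_subset_arc ht2 htn hkn (by rw [hm, finOfNat_add_self]) hp.reverse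
        (by simpa using hpc) (by simpa [hm] using h)

theorem le_ncard_image_edgeSet_of_isKColorConnecting {c : Sym2 (Fin (2 * k - 1)) → ℕ}
    [NeZero (2 * k - 1)] {ht : t < 2 * k - 1} (ht2 : 2 ≤ t) (htk : t < k)
    (hc : (chordedCycle (2 * k - 1) t (NeZero.pos _) ht).IsKColorConnecting k c) :
    2 * k - t ≤ (c '' (chordedCycle (2 * k - 1) t (NeZero.pos _) ht).edgeSet).ncard := by
  classical
  have hf := rainbowArcs_of_isKColorConnecting ht2 (by lia) (by lia) (by lia) hc
  refine (le_card_image_range_of_rainbowArcs hf (fun j => by rw [cycleEdge_add_self]) (by lia)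
    htk).trans ?_
  rw [← Set.ncard_coe_finset]
  refine Set.ncard_le_ncard ?_ (Set.toFinite _)
  rw [Finset.coe_image]
  rintro _ ⟨j, -, rfl⟩
  exact Set.mem_image_of_mem c
    (chordedCycle_adj_iff.2 (.inl (cycleGraph_adj_ofNat_succ (by lia) j)))

end ChordedCycle

section ColorJoined

variable {V : Type*} {G : SimpleGraph V} {c : Sym2 V → ℕ} {k : ℕ} {u v : V}

/-- Some path from `u` to `v` uses at least `k` colors; `G.IsKColorConnecting k c` asks this of all
pairs of distinct vertices. -/
def ColorJoined (G : SimpleGraph V) (k : ℕ) (c : Sym2 V → ℕ) (u v : V) : Prop :=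
  ∃ p : G.Walk u v, p.IsPath ∧ k ≤ (p.edges.map c).toFinset.card

theorem ColorJoined.symm (h : ColorJoined G k c u v) : ColorJoined G k c v u := by
  obtain ⟨p, hp, hc⟩ := h
  exact ⟨p.reverse, hp.reverse, by simpa using hc⟩

theorem colorJoined_of_subset_colors {p : G.Walk u v} (hp : p.IsPath) {S : Finset ℕ}
    (hS : k ≤ S.card) (h : ∀ y ∈ S, ∃ e ∈ p.edges, c e = y) : ColorJoined G k c u v :=
  ⟨p, hp, hS.trans (Finset.card_le_card fun y hy => by simpa using h y hy)⟩

end ColorJoined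

section UpperBound

variable {n t k a b j s x w : ℕ}

theorem disjoint_arc [NeZero n] {a' b' : ℕ} (hba : b < a') (hb : b' < a + n) :
    Disjoint (arc n a b) (arc n a' b') := by
  refine Finset.disjoint_left.2 fun w hw hw' => ?_
  obtain ⟨i, hai, hib, rfl⟩ := mem_arc.1 hw
  obtain ⟨j, haj, hjb, hji⟩ := mem_arc.1 hw'
  have := (finOfNat_inj_of_mem_Ico (a := a) ⟨by lia, by lia⟩ ⟨by lia, by lia⟩).1 hji
  lia

theorem colorJoined_of_rainbowArcs [NeZero n] {G : SimpleGraph (Fin n)} (hG : cycleGraph n ≤ G)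
    {c : Sym2 (Fin n) → ℕ} (hc : RainbowArcs n t k fun j => c (cycleEdge n j))
    (hs : s ∈ Set.Icc t n) (hsk : s + k ≤ n ∨ t + n ≤ s + k) (has : a ≤ s) (hsb : s + k ≤ b)
    (hb : b < a + n) : ColorJoined G k c (Fin.ofNat n a) (Fin.ofNat n b) := by
  obtain ⟨p, hp, -, hedges⟩ := exists_isPath_arc hG (show a ≤ b by lia) hb
  have hcard : ((Finset.Ico s (s + k)).image fun j => c (cycleEdge n j)).card = k := by
    rw [Finset.card_image_of_injOn (by simpa using hc s hs hsk), Nat.card_Ico]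
    lia
  refine colorJoined_of_subset_colors hp hcard.ge fun y hy => ?_
  obtain ⟨j, hj, rfl⟩ := Finset.mem_image.1 hy
  rw [Finset.mem_Ico] at hj
  exact ⟨cycleEdge n j, hedges j ⟨by lia, by lia⟩, rfl⟩

section OddCycle

variable [NeZero (2 * k - 1)] {G : SimpleGraph (Fin (2 * k - 1))}
  {c : Sym2 (Fin (2 * k - 1)) → ℕ}

theorem colorJoined_of_le_chord_end (hG : cycleGraph (2 * k - 1) ≤ G)
    (hc : RainbowArcs (2 * k - 1) t k fun j => c (cycleEdge (2 * k - 1) j)) (htk : t < k)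
    (hab : a < b) (hbt : b ≤ t) :
    ColorJoined G k c (Fin.ofNat (2 * k - 1) a) (Fin.ofNat (2 * k - 1) b) := by
  rw [← finOfNat_add_self a]
  exact (colorJoined_of_rainbowArcs hG hc (s := t) ⟨by lia, by lia⟩ (.inl (by lia)) hbt (by lia)
    (by lia)).symm

theorem colorJoined_of_chord_end_le (hG : cycleGraph (2 * k - 1) ≤ G)
    (hc : RainbowArcs (2 * k - 1) t k fun j => c (cycleEdge (2 * k - 1) j)) (ht0 : 0 < t)
    (htk : t < k) (hta : t ≤ a) (hab : a < b) (hb : b ≤ 2 * k - 1) :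
    ColorJoined G k c (Fin.ofNat (2 * k - 1) a) (Fin.ofNat (2 * k - 1) b) := by
  by_cases hk : a + k ≤ b
  · exact colorJoined_of_rainbowArcs hG hc (s := a) ⟨by lia, by lia⟩ (.inl (by lia)) le_rfl hk
      (by lia)
  · rw [← finOfNat_add_self a]
    exact (colorJoined_of_rainbowArcs hG hc (s := min (a + k - 1) (2 * k - 1)) ⟨by lia, by lia⟩
      (.inr (by lia)) (by lia) (by lia) (by lia)).symm

end OddCycle

/-- The color of the edge `{j, j + 1}`, `j < 2 * k - 1`, in the optimal coloring: the edges
`0, …, t - 2` of the short arc reuse, in reverse order, the colors `k, …, t + k - 2` of edges of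
the long arc, and every other edge has its own index as color. -/
def arcColor (k t j : ℕ) : ℕ :=
  if j + 1 < t then t + k - 2 - j else j

theorem arcColor_mem_Icc (ht : 0 < t) (htk : t < k) (hj : j < 2 * k - 1) :
    arcColor k t j ∈ Set.Icc (t - 1) (2 * k - 2) := by
  rw [arcColor, Set.mem_Icc]
  split_ifs <;> lia

theorem rainbowArcs_arcColor (htk : t < k) :
    RainbowArcs (2 * k - 1) t k fun j => arcColor k t (j % (2 * k - 1)) := by
  have hmod : ∀ j < 2 * k - 1 + k, j % (2 * k - 1) = if j < 2 * k - 1 then j else j - (2 * k - 1) :=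
    fun j hj => by
      split_ifs with hjn
      · exact Nat.mod_eq_of_lt hjn
      · rw [Nat.mod_eq_sub_mod (by lia), Nat.mod_eq_of_lt (by lia)]
  rintro s ⟨hts, hsn⟩ hs i hi j hj hij
  simp only [Set.mem_Ico] at hi hj
  simp only [hmod i (by lia), hmod j (by lia), arcColor] at hij
  split_ifs at hij <;> lia

/-- The optimal coloring of the chorded cycle: `arcColor` on the cycle, and on the chord the
color `t - 1` of the edge `{t - 1, t}`. -/
noncomputable def chordedCycleColoring (k t : ℕ) [NeZero (2 * k - 1)] :
    Sym2 (Fin (2 * k - 1)) → ℕ :=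
  Function.extend (fun j : Fin (2 * k - 1) => cycleEdge (2 * k - 1) j)
    (fun j => arcColor k t j) fun _ => t - 1

variable [NeZero (2 * k - 1)] {ht : t < 2 * k - 1}

theorem chordedCycleColoring_cycleEdge (hk : 2 ≤ k) (j : ℕ) :
    chordedCycleColoring k t (cycleEdge (2 * k - 1) j) = arcColor k t (j % (2 * k - 1)) := by
  rw [← cycleEdge_val_ofNat]
  exact (cycleEdge_injective (by lia)).extend_apply _ _ (Fin.ofNat (2 * k - 1) j)

theorem chordedCycleColoring_cycleEdge_of_lt (hk : 2 ≤ k) (hj : j < 2 * k - 1) :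
    chordedCycleColoring k t (cycleEdge (2 * k - 1) j) = arcColor k t j := by
  rw [chordedCycleColoring_cycleEdge hk, Nat.mod_eq_of_lt hj]

theorem chordedCycleColoring_chord (ht2 : 2 ≤ t) (htn : t + 1 < 2 * k - 1) :
    chordedCycleColoring k t s(Fin.ofNat (2 * k - 1) 0, Fin.ofNat (2 * k - 1) t) = t - 1 := by
  refine Function.extend_apply' _ _ _ ?_
  rintro ⟨j, hj⟩
  have hadj : (cycleGraph (2 * k - 1)).Adj (Fin.ofNat (2 * k - 1) 0) (Fin.ofNat (2 * k - 1) t) := by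
    rw [← mem_edgeSet, ← hj]
    exact cycleGraph_adj_ofNat_succ (by lia) j
  rw [cycleGraph_adj_ofNat_iff (a := 0) (b := t) (by simp) (by simp) (by lia)] at hadj
  lia

theorem chordedCycleColoring_mem_Icc (ht0 : 0 < t) (htk : t < k) (e : Sym2 (Fin (2 * k - 1))) :
    chordedCycleColoring k t e ∈ Set.Icc (t - 1) (2 * k - 2) := by
  by_cases he : ∃ j : Fin (2 * k - 1), cycleEdge (2 * k - 1) j = e
  · obtain ⟨j, rfl⟩ := he
    rw [chordedCycleColoring_cycleEdge_of_lt (by lia) j.isLt]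
    exact arcColor_mem_Icc ht0 htk j.isLt
  · rw [chordedCycleColoring, Function.extend_apply' _ _ _ he]
    exact ⟨by lia, by lia⟩

theorem chordedCycle_adj_chord (ht0 : 0 < t) : (chordedCycle (2 * k - 1) t (NeZero.pos _) ht).Adj
    (Fin.ofNat (2 * k - 1) 0) (Fin.ofNat (2 * k - 1) t) := by
  refine chordedCycle_adj_iff.2 (.inr ⟨rfl, ?_⟩)
  rw [Ne, finOfNat_inj_of_lt (by lia) ht]
  exact ht0.ne

theorem colorJoined_through_chord_of_le_add (ht2 : 2 ≤ t) (htk : t < k) (hxt : x < t)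
    (hw : w < 2 * k - 1) (hxw : t + k - 1 ≤ x + w) :
    ColorJoined (chordedCycle (2 * k - 1) t (NeZero.pos _) ht) k (chordedCycleColoring k t)
      (Fin.ofNat (2 * k - 1) x) (Fin.ofNat (2 * k - 1) w) := by
  obtain ⟨p, hp, hps, hpe⟩ := exists_isPath_arc (G := chordedCycle (2 * k - 1) t (NeZero.pos _) ht)
    le_sup_left x.zero_le (by lia)
  obtain ⟨q, hq, hqs, hqe⟩ := exists_isPath_arc (G := chordedCycle (2 * k - 1) t (NeZero.pos _) ht)
    le_sup_left (show t ≤ w by lia) (by lia)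
  have hdisj : p.reverse.support.Disjoint q.support := fun z hz hz' =>
    Finset.disjoint_left.1 (disjoint_arc hxt (by lia)) (hps z (by simpa using hz)) (hqs z hz')
  have hpath := isPath_append_cons hp.reverse hq (chordedCycle_adj_chord (by lia)) hdisj
  refine colorJoined_of_subset_colors hpath (S := Finset.Ico (t - 1) (t - 1 + k)) (by simp)
    fun y hy => ?_
  rw [Finset.mem_Ico] at hy
  simp only [Walk.edges_append, Walk.edges_cons, Walk.edges_reverse, List.mem_append,
    List.mem_reverse, List.mem_cons]
  obtain hy' | hy' | hy' : y = t - 1 ∨ t ≤ y ∧ y < w ∨ w ≤ y := by lia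
  · exact ⟨_, .inr (.inl rfl), hy' ▸ chordedCycleColoring_chord (by lia) (by lia)⟩
  · refine ⟨cycleEdge _ y, .inr (.inr (hqe y hy')), ?_⟩
    rw [chordedCycleColoring_cycleEdge_of_lt (by lia) (by lia), arcColor, if_neg (by lia)]
  · refine ⟨cycleEdge _ (t + k - 2 - y), .inl (hpe _ ⟨by lia, by lia⟩), ?_⟩
    rw [chordedCycleColoring_cycleEdge_of_lt (by lia) (by lia), arcColor, if_pos (by lia)]
    lia

theorem colorJoined_through_chord_of_add_le (htk : t < k) (hx0 : 0 < x) (hxt : x < t) (htw : t < w)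
    (hxw : x + w ≤ t + k - 1) :
    ColorJoined (chordedCycle (2 * k - 1) t (NeZero.pos _) ht) k (chordedCycleColoring k t)
      (Fin.ofNat (2 * k - 1) x) (Fin.ofNat (2 * k - 1) w) := by
  obtain ⟨p, hp, hps, hpe⟩ := exists_isPath_arc (G := chordedCycle (2 * k - 1) t (NeZero.pos _) ht)
    le_sup_left hxt.le (by lia)
  obtain ⟨q, hq, hqs, hqe⟩ := exists_isPath_arc (G := chordedCycle (2 * k - 1) t (NeZero.pos _) ht)
    le_sup_left (show w ≤ 2 * k - 1 by lia) (by lia)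
  have hn : Fin.ofNat (2 * k - 1) 0 = Fin.ofNat (2 * k - 1) (2 * k - 1) := by
    rw [← finOfNat_add_self 0, zero_add]
  have hdisj : p.support.Disjoint q.reverse.support := fun z hz hz' =>
    Finset.disjoint_left.1 (disjoint_arc htw (by lia)) (hps z hz) (hqs z (by simpa using hz'))
  have hpath := isPath_append_cons hp hq.reverse
    (hn ▸ (chordedCycle_adj_chord (by lia)).symm) hdisj
  refine colorJoined_of_subset_colors hpath (S := insert (t - 1) (Finset.Ico k (2 * k - 1))) ?_
    fun y hy => ?_
  · rw [Finset.card_insert_of_notMem (by rw [Finset.mem_Ico]; lia), Nat.card_Ico]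
    lia
  rw [Finset.mem_insert, Finset.mem_Ico] at hy
  simp only [Walk.edges_append, Walk.edges_cons, Walk.edges_reverse, List.mem_append,
    List.mem_reverse, List.mem_cons]
  obtain hy' | hy' | hy' : y = t - 1 ∨ w ≤ y ∧ y < 2 * k - 1 ∨ k ≤ y ∧ y < w := by lia
  · refine ⟨_, .inr (.inl rfl), ?_⟩
    rw [← hn, Sym2.eq_swap, hy', chordedCycleColoring_chord (by lia) (by lia)]
  · refine ⟨cycleEdge _ y, .inr (.inr (hqe y hy')), ?_⟩
    rw [chordedCycleColoring_cycleEdge_of_lt (by lia) (by lia), arcColor, if_neg (by lia)]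
  · refine ⟨cycleEdge _ (t + k - 2 - y), .inl (hpe _ ⟨by lia, by lia⟩), ?_⟩
    rw [chordedCycleColoring_cycleEdge_of_lt (by lia) (by lia), arcColor, if_pos (by lia)]
    lia

theorem colorJoined_chordedCycleColoring (ht2 : 2 ≤ t) (htk : t < k) (hab : a < b)
    (hb : b < 2 * k - 1) :
    ColorJoined (chordedCycle (2 * k - 1) t (NeZero.pos _) ht) k (chordedCycleColoring k t)
      (Fin.ofNat (2 * k - 1) a) (Fin.ofNat (2 * k - 1) b) := by
  have hG : cycleGraph (2 * k - 1) ≤ chordedCycle (2 * k - 1) t (NeZero.pos _) ht := le_sup_left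
  have hc : RainbowArcs (2 * k - 1) t k fun j =>
      chordedCycleColoring k t (cycleEdge (2 * k - 1) j) := by
    simpa only [chordedCycleColoring_cycleEdge (show 2 ≤ k by lia)] using rainbowArcs_arcColor htk
  rcases le_or_gt b t with hbt | htb
  · exact colorJoined_of_le_chord_end hG hc htk hab hbt
  rcases le_or_gt t a with hta | hat
  · exact colorJoined_of_chord_end_le hG hc (by lia) htk hta hab hb.le
  rcases Nat.eq_zero_or_pos a with rfl | ha
  · rw [← finOfNat_add_self 0, zero_add]
    exact (colorJoined_of_chord_end_le hG hc (by lia) htk htb.le hb le_rfl).symm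
  rcases le_total (t + k - 1) (a + b) with hle | hle
  · exact colorJoined_through_chord_of_le_add ht2 htk hat hb hle
  · exact colorJoined_through_chord_of_add_le htk ha hat htb hle

theorem isKColorConnecting_chordedCycleColoring (ht2 : 2 ≤ t) (htk : t < k) :
    (chordedCycle (2 * k - 1) t (NeZero.pos _) ht).IsKColorConnecting k
      (chordedCycleColoring k t) := by
  suffices h : ∀ u v : Fin (2 * k - 1), u < v →
      ColorJoined (chordedCycle (2 * k - 1) t (NeZero.pos _) ht) k (chordedCycleColoring k t) u v
    from fun u v huv => huv.lt_or_gt.elim (h u v) fun hvu => (h v u hvu).symm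
  intro u v huv
  rw [← Fin.ofNat_val_eq_self u, ← Fin.ofNat_val_eq_self v]
  exact colorJoined_chordedCycleColoring ht2 htk huv v.isLt

theorem ncard_image_chordedCycleColoring_le (ht0 : 0 < t) (htk : t < k)
    (E : Set (Sym2 (Fin (2 * k - 1)))) : (chordedCycleColoring k t '' E).ncard ≤ 2 * k - t := by
  calc (chordedCycleColoring k t '' E).ncard ≤ (Set.Icc (t - 1) (2 * k - 2)).ncard :=
        Set.ncard_le_ncard (Set.image_subset_iff.2 fun e _ =>
          chordedCycleColoring_mem_Icc ht0 htk e)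
    _ = 2 * k - t := by
        rw [← Finset.coe_Icc, Set.ncard_coe_finset, Nat.card_Icc]
        lia

end UpperBound

theorem stmt_1 (k t : ℕ) (hk : 3 ≤ k) (ht2 : 2 ≤ t) (htk : t ≤ k - 1) :
    (chordedCycle (2 * k - 1) t (by omega) (by omega)).KColorConnectable k ∧
    (chordedCycle (2 * k - 1) t (by omega) (by omega)).ccConn k = 2 * k - t := by
  have : NeZero (2 * k - 1) := ⟨by lia⟩
  have htk' : t < k := by lia
  have hconn := isKColorConnecting_chordedCycleColoring (ht := by lia) ht2 htk'
  refine ⟨⟨_, hconn⟩, IsLeast.csInf_eq ⟨⟨_, hconn, ?_⟩, ?_⟩⟩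
  · exact (ncard_image_chordedCycleColoring_le (by lia) htk' _).antisymm
      (le_ncard_image_edgeSet_of_isKColorConnecting ht2 htk' hconn)
  · rintro _ ⟨c, hc, rfl⟩
    exact le_ncard_image_edgeSet_of_isKColorConnecting ht2 htk' hc
end

section
/- Let G be a finite connected simple graph whose blocks are B_1, B_2, …, B_t, and let k ≥ 2. Then G is k-color connectable if and only if every block B_i is k-color connectable, and in that case cc_k(G) = max_{1 ≤ i ≤ t} cc_k(B_i). -/
open SimpleGraph

/-- A graph is 2-connected if it has at least 3 vertices, is connected, and remains
connected after deleting any single vertex. -/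
def SimpleGraph.IsTwoConnected {V : Type*} (G : SimpleGraph V) : Prop :=
  3 ≤ Nat.card V ∧ G.Connected ∧ ∀ v : V, (G.induce {v}ᶜ).Connected

/-- A subgraph that is 2-connected or a single edge. -/
def SimpleGraph.IsBlockPiece {V : Type*} (G : SimpleGraph V) (B : G.Subgraph) : Prop :=
  B.coe.IsTwoConnected ∨ ∃ u v : V, u ≠ v ∧ B.verts = {u, v} ∧ B.Adj u v

/-- A block of `G`: a maximal subgraph that is 2-connected or a single edge. -/
def SimpleGraph.IsBlock {V : Type*} (G : SimpleGraph V) (B : G.Subgraph) : Prop :=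
  G.IsBlockPiece B ∧ ∀ B' : G.Subgraph, G.IsBlockPiece B' → B ≤ B' → B = B'

/-!
A block is a maximal nonseparable subgraph: nontrivial, and connected after the deletion of any set
of at most one vertex. Nonseparability survives gluing along two vertices and adding a path with
both ends in the subgraph. Hence distinct blocks share no edge, and a path of `G` between two
vertices of a block stays inside it, so a connecting coloring of `G` restricts to one of every
block.

Conversely, color every block separately. A path from `u` to `v` starts with an edge of some block;
let `y` be its last vertex in that block. Replacing the part before `y` by a path of the block with
`k` colors gives a path from `u` to `v` with at least `k` colors. If the blocks draw their colors
from the same `n` colors, no further color is needed.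
-/

section

variable {V : Type*} {G : SimpleGraph V} {H K : G.Subgraph}

/-- A nonseparable subgraph: it has at least two vertices and stays connected when any set of at
most one vertex is deleted. Unlike `IsBlockPiece`, this treats 2-connected subgraphs and single
edges uniformly; the set being empty gives connectedness of `H` itself. -/
structure IsNonseparable (H : G.Subgraph) : Prop where
  nontrivial : H.verts.Nontrivial
  connected_deleteVerts : ∀ ⦃s : Set V⦄, s.Subsingleton → (H.deleteVerts s).Connected

theorem IsNonseparable.connected (hH : IsNonseparable H) : H.Connected := by
  simpa only [Subgraph.deleteVerts_empty] using
    hH.connected_deleteVerts Set.subsingleton_empty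

theorem connected_deleteVerts_singleton_iff (x : H.verts) :
    (H.deleteVerts {x.1}).Connected ↔ (H.coe.induce {x}ᶜ).Connected := by
  have hset : {v : H.verts | (v : V) ∉ ({x.1} : Set V)} = {x}ᶜ := by
    ext v
    simp [Subtype.ext_iff]
  rw [Subgraph.connected_iff', (Subgraph.coeDeleteVertsIso {x.1}).connected_iff, hset]

theorem isNonseparable_of_isTwoConnected (hH : H.coe.IsTwoConnected) : IsNonseparable H := by
  obtain ⟨hcard, hconn, hdel⟩ := hH
  have : Finite H.verts := Nat.finite_of_card_ne_zero (by lia)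
  refine ⟨?_, fun s hs => ?_⟩
  · rw [← Set.nontrivial_coe_sort, ← Finite.one_lt_card_iff_nontrivial]
    lia
  · obtain rfl | ⟨x, rfl⟩ := hs.eq_empty_or_singleton
    · rw [Subgraph.deleteVerts_empty]
      exact ⟨hconn⟩
    · by_cases hx : x ∈ H.verts
      · exact (connected_deleteVerts_singleton_iff ⟨x, hx⟩).2 (hdel ⟨x, hx⟩)
      · rw [← Subgraph.deleteVerts_inter_verts_left_eq, Set.inter_singleton_eq_empty.2 hx,
          Subgraph.deleteVerts_empty]
        exact ⟨hconn⟩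

theorem isNonseparable_of_verts_eq_pair {u v : V} (hverts : H.verts = {u, v}) (huv : H.Adj u v) :
    IsNonseparable H := by
  refine ⟨hverts ▸ Set.nontrivial_pair huv.ne, fun s hs => ?_⟩
  rw [Subgraph.connected_iff, Subgraph.preconnected_iff]
  constructor
  · rintro ⟨a, ha, has⟩ ⟨b, hb, hbs⟩
    obtain rfl | hab := eq_or_ne a b
    · rfl
    · have hadj : H.Adj a b := by
        rw [hverts] at ha hb
        obtain rfl | rfl := ha <;> obtain rfl | rfl := hb <;>
          first | exact absurd rfl hab | exact huv | exact huv.symm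
      exact Adj.reachable (Subgraph.deleteVerts_adj.2 ⟨ha, has, hb, hbs, hadj⟩)
  · by_cases hus : u ∈ s
    · exact ⟨v, huv.snd_mem, fun hvs => huv.ne (hs hus hvs)⟩
    · exact ⟨u, huv.fst_mem, hus⟩

theorem IsNonseparable.isTwoConnected (hH : IsNonseparable H) (hcard : 3 ≤ Nat.card H.verts) :
    H.coe.IsTwoConnected :=
  ⟨hcard, hH.connected.coe, fun x => (connected_deleteVerts_singleton_iff x).1
    (hH.connected_deleteVerts Set.subsingleton_singleton)⟩

theorem adj_of_connected_of_verts_eq_pair (hH : H.Connected) {u v : V} (huv : u ≠ v)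
    (hverts : H.verts = {u, v}) : H.Adj u v := by
  have : Nontrivial H.verts := by
    rw [hverts]
    exact (Set.nontrivial_pair huv).coe_sort
  obtain ⟨w, huw⟩ := hH.preconnected.exists_adj_of_nontrivial ⟨u, by simp [hverts]⟩
  obtain rfl | rfl : w = u ∨ w = v := by simpa [hverts] using huw.snd_mem
  · exact absurd rfl huw.ne
  · exact huw

theorem isBlockPiece_iff_isNonseparable [Finite H.verts] :
    G.IsBlockPiece H ↔ IsNonseparable H := by
  refine ⟨?_, fun hH => ?_⟩
  · rintro (hH | ⟨u, v, -, hverts, huv⟩)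
    · exact isNonseparable_of_isTwoConnected hH
    · exact isNonseparable_of_verts_eq_pair hverts huv
  · have hcard : 1 < Nat.card H.verts :=
      Finite.one_lt_card_iff_nontrivial.2 hH.nontrivial.coe_sort
    obtain hcard | hcard : 3 ≤ Nat.card H.verts ∨ H.verts.ncard = 2 := by
      rw [← Nat.card_coe_set_eq]
      lia
    · exact Or.inl (hH.isTwoConnected hcard)
    · obtain ⟨u, v, huv, hverts⟩ := Set.ncard_eq_two.1 hcard
      exact Or.inr ⟨u, v, huv, hverts,
        adj_of_connected_of_verts_eq_pair hH.connected huv hverts⟩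

theorem isBlock_iff_maximal_isNonseparable [Finite V] :
    G.IsBlock H ↔ Maximal IsNonseparable H := by
  simp only [SimpleGraph.IsBlock, isBlockPiece_iff_isNonseparable, maximal_iff]

theorem IsNonseparable.sup (hH : IsNonseparable H) (hK : IsNonseparable K)
    (hHK : (H ⊓ K).verts.Nontrivial) : IsNonseparable (H ⊔ K) := by
  refine ⟨hH.nontrivial.mono Set.subset_union_left, fun s hs => ?_⟩
  obtain ⟨x, ⟨hxH, hxK⟩, hxs⟩ : ∃ x ∈ (H ⊓ K).verts, x ∉ s :=
    Set.not_subset.1 fun hsub => hHK.not_subsingleton (hs.anti hsub)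
  refine (Subgraph.connected_sup (hH.connected_deleteVerts hs).preconnected
    (hK.connected_deleteVerts hs).preconnected ⟨x, ⟨hxH, hxs⟩, hxK, hxs⟩).mono
    (sup_le (Subgraph.deleteVerts_mono le_sup_left) (Subgraph.deleteVerts_mono le_sup_right)) ?_
  exact Set.union_sdiff_distrib.symm

theorem connected_of_forall_exists_walk (hH : H.Connected) (hHK : H ≤ K)
    (hwalk : ∀ a ∈ K.verts, ∃ b ∈ H.verts, ∃ p : G.Walk a b, p.toSubgraph ≤ K) :
    K.Connected := by
  rw [Subgraph.connected_iff_forall_exists_walk_subgraph] at hH ⊢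
  refine ⟨hH.1.mono hHK.1, fun {a b} ha hb => ?_⟩
  obtain ⟨a', ha', p, hp⟩ := hwalk a ha
  obtain ⟨b', hb', q, hq⟩ := hwalk b hb
  obtain ⟨w, hw⟩ := hH.2 ha' hb'
  refine ⟨p.append (w.append q.reverse), ?_⟩
  simp only [Walk.toSubgraph_append, Walk.toSubgraph_reverse, sup_le_iff]
  exact ⟨hp, hw.trans hHK, hq⟩

theorem le_deleteVerts {s : Set V} (hHK : H ≤ K) (hs : Disjoint H.verts s) :
    H ≤ K.deleteVerts s := by
  have hH : H.deleteVerts s = H := by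
    rw [← Subgraph.deleteVerts_inter_verts_left_eq, hs.inter_eq, Subgraph.deleteVerts_empty]
  exact hH ▸ Subgraph.deleteVerts_mono hHK

theorem IsNonseparable.sup_toSubgraph (hH : IsNonseparable H) {u v : V} (hu : u ∈ H.verts)
    (hv : v ∈ H.verts) {p : G.Walk u v} (hp : p.IsPath) :
    IsNonseparable (H ⊔ p.toSubgraph) := by
  refine ⟨hH.nontrivial.mono Set.subset_union_left, fun s hs => ?_⟩
  refine connected_of_forall_exists_walk (hH.connected_deleteVerts hs)
    (Subgraph.deleteVerts_mono le_sup_left) ?_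
  rintro a ⟨haH | hap, has⟩
  · refine ⟨a, ⟨haH, has⟩, Walk.nil, ?_⟩
    simpa using ⟨Or.inl haH, has⟩
  · rw [Walk.mem_verts_toSubgraph] at hap
    obtain ⟨q, r, -, -, rfl⟩ := hp.mem_support_iff_exists_append.1 hap
    rw [Walk.toSubgraph_append]
    by_cases hqs : Disjoint q.toSubgraph.verts s
    · refine ⟨u, ⟨hu, hqs.notMem_of_mem_left q.start_mem_verts_toSubgraph⟩, q.reverse, ?_⟩
      rw [Walk.toSubgraph_reverse]
      exact le_deleteVerts (le_sup_left.trans le_sup_right) hqs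
    · -- `s` already meets the part before `a`, so it misses the part after it.
      obtain ⟨x, hxq, hxs⟩ := Set.not_disjoint_iff.1 hqs
      have hrs : Disjoint r.toSubgraph.verts s := by
        refine Set.disjoint_left.2 fun y hyr hys => ?_
        rw [Walk.mem_verts_toSubgraph] at hxq hyr
        have hya : y ≠ a := fun h => has (h ▸ hys)
        exact hp.ne_of_mem_support_of_append hya hxq hyr (hs hxs hys)
      exact ⟨v, ⟨hv, hrs.notMem_of_mem_left r.end_mem_verts_toSubgraph⟩, r,
        le_deleteVerts (le_sup_right.trans le_sup_right) hrs⟩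

/-- All-path convexity: every path of `G` between two vertices of `H` is contained in `H`. -/
def IsPathConvex (H : G.Subgraph) : Prop :=
  ∀ ⦃u v : V⦄, u ∈ H.verts → v ∈ H.verts → ∀ p : G.Walk u v, p.IsPath → p.toSubgraph ≤ H

theorem isPathConvex_of_maximal_isNonseparable (hH : Maximal IsNonseparable H) :
    IsPathConvex H := fun _ _ hu hv _ hp =>
  le_sup_right.trans (hH.2 (hH.prop.sup_toSubgraph hu hv hp) le_sup_left)

theorem eq_of_maximal_isNonseparable_of_adj (hH : Maximal IsNonseparable H)
    (hK : Maximal IsNonseparable K) {u v : V} (huvH : H.Adj u v) (huvK : K.Adj u v) :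
    H = K := by
  have hsup : IsNonseparable (H ⊔ K) := hH.prop.sup hK.prop
    ⟨u, ⟨huvH.fst_mem, huvK.fst_mem⟩, v, ⟨huvH.snd_mem, huvK.snd_mem⟩, huvH.ne⟩
  exact (hH.eq_of_le hsup le_sup_left).trans (hK.eq_of_le hsup le_sup_right).symm

theorem disjoint_edgeSet_of_maximal_isNonseparable (hH : Maximal IsNonseparable H)
    (hK : Maximal IsNonseparable K) (hHK : H ≠ K) : Disjoint H.edgeSet K.edgeSet := by
  refine Set.disjoint_left.2 fun e => ?_
  induction e with
  | _ u v => exact fun huvH huvK => hHK (eq_of_maximal_isNonseparable_of_adj hH hK huvH huvK)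

theorem exists_maximal_isNonseparable_adj [Finite V] {u v : V} (huv : G.Adj u v) :
    ∃ H : G.Subgraph, Maximal IsNonseparable H ∧ H.Adj u v := by
  obtain ⟨H, hle, hH⟩ := Finite.exists_le_maximal
    (isNonseparable_of_verts_eq_pair (H := G.subgraphOfAdj huv) rfl (by simp))
  exact ⟨H, hH, hle.2 (by simp)⟩

variable {k n : ℕ} {c : Sym2 V → ℕ}

theorem isKColorConnecting_of_refines {d : Sym2 V → ℕ} (hc : G.IsKColorConnecting k c)
    (hcd : ∀ e ∈ G.edgeSet, ∀ e' ∈ G.edgeSet, d e = d e' → c e = c e') :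
    G.IsKColorConnecting k d := by
  intro u v huv
  obtain ⟨p, hp, hk⟩ := hc u v huv
  refine ⟨p, hp, hk.trans ?_⟩
  refine Finset.card_le_card_of_forall_subsingleton
    (fun a b => ∃ e ∈ p.edges, c e = a ∧ d e = b) ?_ ?_
  · simp only [List.mem_toFinset, List.mem_map]
    rintro _ ⟨e, he, rfl⟩
    exact ⟨d e, ⟨e, he, rfl⟩, e, he, rfl, rfl⟩
  · rintro _ - _ ⟨-, e, he, rfl, hde⟩ _ ⟨-, e', he', rfl, hde'⟩
    exact hcd e (p.edges_subset_edgeSet he) e' (p.edges_subset_edgeSet he') (hde.trans hde'.symm)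

theorem map_edges_map_hom {u v : H.verts} (p : H.coe.Walk u v) :
    (p.map H.hom).edges.map c = p.edges.map (c ∘ Sym2.map Subtype.val) := by
  rw [Walk.edges_map, List.map_map]
  rfl

theorem toSubgraph_map_hom_le {u v : H.verts} (p : H.coe.Walk u v) :
    (p.map H.hom).toSubgraph ≤ H := by
  rw [Walk.toSubgraph_map]
  exact Subgraph.coeSubgraph_le _

theorem exists_walk_map_hom_eq {u v : H.verts} {p : G.Walk (H.hom u) (H.hom v)}
    (hp : p.toSubgraph ≤ H) : ∃ q : H.coe.Walk u v, q.map H.hom = p :=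
  ⟨p.mapToSubgraph.map (Subgraph.inclusion hp),
    (Walk.map_map _ _ _).trans p.map_mapToSubgraph_hom⟩

theorem isKColorConnecting_coe_iff :
    H.coe.IsKColorConnecting k (c ∘ Sym2.map Subtype.val) ↔
      ∀ u ∈ H.verts, ∀ v ∈ H.verts, u ≠ v → ∃ p : G.Walk u v,
        p.IsPath ∧ p.toSubgraph ≤ H ∧ k ≤ (p.edges.map c).toFinset.card := by
  constructor
  · intro hH u hu v hv huv
    obtain ⟨q, hq, hk⟩ := hH ⟨u, hu⟩ ⟨v, hv⟩ fun h => huv (congrArg Subtype.val h)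
    rw [← map_edges_map_hom] at hk
    exact ⟨q.map H.hom, hq.map Subgraph.hom_injective, toSubgraph_map_hom_le q, hk⟩
  · intro hH u v huv
    obtain ⟨p, hp, hpH, hk⟩ := hH u u.2 v v.2 fun h => huv (Subtype.ext h)
    obtain ⟨q, hqp⟩ := exists_walk_map_hom_eq (u := u) (v := v) hpH
    refine ⟨q, Walk.IsPath.of_map (f := H.hom) (hqp ▸ hp), ?_⟩
    rw [← map_edges_map_hom, hqp]
    exact hk

theorem IsPathConvex.isKColorConnecting_coe (hH : IsPathConvex H)
    (hc : G.IsKColorConnecting k c) :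
    H.coe.IsKColorConnecting k (c ∘ Sym2.map Subtype.val) :=
  isKColorConnecting_coe_iff.2 fun u hu v hv huv =>
    (hc u v huv).imp fun p hp => ⟨hp.1, hH hu hv p hp.1, hp.2⟩

theorem isPath_append {u y v : V} {q : G.Walk u y} {r : G.Walk y v} (hq : q.IsPath)
    (hr : r.IsPath) (hqr : ∀ z ∈ q.support, z ∈ r.support → z = y) : (q.append r).IsPath := by
  rw [Walk.isPath_def, Walk.support_append, List.nodup_append']
  refine ⟨hq.support_nodup, hr.support_nodup.tail, fun z hzq hzr => ?_⟩
  obtain rfl := hqr z hzq (List.mem_of_mem_tail hzr)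
  have hnodup := hr.support_nodup
  rw [← Walk.cons_tail_support, List.nodup_cons] at hnodup
  exact hnodup.1 hzr

theorem exists_isPath_last_mem (A : Set V) {x v : V} {p : G.Walk x v} (hp : p.IsPath)
    (hx : x ∈ A) :
    ∃ y ∈ A, y ∈ p.support ∧ ∃ r : G.Walk y v, r.IsPath ∧ ∀ z ∈ r.support, z ∈ A → z = y := by
  classical
  obtain ⟨y, hyA, hyp, hfirst⟩ := p.reverse.exists_mem_support_forall_mem_support_imp_eq
    {z ∈ p.support.toFinset | z ∈ A} ⟨x, by simp [hx]⟩
  rw [Finset.mem_filter, List.mem_toFinset] at hyA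
  refine ⟨y, hyA.2, hyA.1, (p.reverse.takeUntil y hyp).reverse,
    (hp.reverse.takeUntil hyp).reverse, fun z hz hzA => ?_⟩
  rw [Walk.support_reverse, List.mem_reverse] at hz
  have hzp : z ∈ p.support := by
    simpa using p.reverse.support_takeUntil_subset_support hyp hz
  exact hfirst z (by simp [hzp, hzA]) hz

theorem isKColorConnecting_of_forall_adj (hG : G.Preconnected)
    (hcover : ∀ u v : V, G.Adj u v → ∃ H : G.Subgraph, H.Adj u v ∧
      H.coe.IsKColorConnecting k (c ∘ Sym2.map Subtype.val)) :
    G.IsKColorConnecting k c := by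
  intro u v huv
  obtain ⟨p, hp⟩ := hG.exists_isPath u v
  cases p with
  | nil => exact absurd rfl huv
  | @cons _ x _ hux p =>
    obtain ⟨H, huxH, hH⟩ := hcover u x hux
    obtain ⟨hp, hup⟩ := (Walk.cons_isPath_iff _ _).1 hp
    obtain ⟨y, hyH, hyp, r, hr, hrH⟩ := exists_isPath_last_mem H.verts hp huxH.snd_mem
    obtain ⟨q, hq, hqH, hk⟩ :=
      isKColorConnecting_coe_iff.1 hH u huxH.fst_mem y hyH fun h => hup (h ▸ hyp)
    have hqr : ∀ z ∈ q.support, z ∈ r.support → z = y := fun z hzq hzr =>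
      hrH z hzr (hqH.1 (q.mem_verts_toSubgraph.2 hzq))
    refine ⟨q.append r, isPath_append hq hr hqr, hk.trans (Finset.card_le_card ?_)⟩
    rw [Walk.edges_append, List.map_append, List.toFinset_append]
    exact Finset.subset_union_left

theorem exists_eqOn_of_pairwise_disjoint_edgeSet {ι α : Type*} [Nonempty α] {H : ι → G.Subgraph}
    (hdisj : Pairwise fun i j => Disjoint (H i).edgeSet (H j).edgeSet)
    (d : ∀ i, Sym2 (H i).verts → α) :
    ∃ c : Sym2 V → α, ∀ i, Set.EqOn (c ∘ Sym2.map Subtype.val) (d i) (H i).coe.edgeSet := by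
  let toEdge : (Σ i, (H i).coe.edgeSet) → Sym2 V := fun e => e.2.1.map Subtype.val
  have hmem (e) : toEdge e ∈ (H e.1).edgeSet := by
    rw [← Subgraph.image_coe_edgeSet_coe]
    exact ⟨e.2, e.2.2, rfl⟩
  have hinj : Function.Injective toEdge := by
    rintro ⟨i, e, he⟩ ⟨j, e', he'⟩ hee'
    obtain rfl : i = j := by
      by_contra hij
      exact Set.disjoint_left.1 (hdisj hij) (hmem ⟨i, e, he⟩) (hee' ▸ hmem ⟨j, e', he'⟩)
    obtain rfl : e = e' := Sym2.map.injective Subtype.val_injective hee'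
    rfl
  refine ⟨Function.extend toEdge (fun e => d e.1 e.2) fun _ => Classical.arbitrary α,
    fun i e he => ?_⟩
  exact hinj.extend_apply _ _ ⟨i, e, he⟩

/-- `G` has a `k`-color connecting coloring whose edge colors are among the `n` colors
`0, …, n - 1`; for a finite connectable graph this says `cc_k(G) ≤ n`. -/
def KColorConnectableWith (G : SimpleGraph V) (k n : ℕ) : Prop :=
  ∃ c : Sym2 V → ℕ, G.IsKColorConnecting k c ∧ ∀ e ∈ G.edgeSet, c e < n

theorem KColorConnectableWith.kColorConnectable (hG : KColorConnectableWith G k n) :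
    G.KColorConnectable k :=
  hG.imp fun _ hc => hc.1

theorem KColorConnectableWith.mono {m : ℕ} (hG : KColorConnectableWith G k m) (hmn : m ≤ n) :
    KColorConnectableWith G k n :=
  hG.imp fun _ hc => ⟨hc.1, fun e he => (hc.2 e he).trans_le hmn⟩

theorem KColorConnectableWith.ccConn_le (hG : KColorConnectableWith G k n) :
    G.ccConn k ≤ n := by
  obtain ⟨c, hc, hlt⟩ := hG
  calc G.ccConn k ≤ (c '' G.edgeSet).ncard := Nat.sInf_le ⟨c, hc, rfl⟩
    _ ≤ (Set.Iio n).ncard := Set.ncard_le_ncard (Set.image_subset_iff.2 hlt) (Set.finite_Iio n)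
    _ = n := by simp

theorem exists_isKColorConnecting_ncard_eq_ccConn (hG : G.KColorConnectable k) :
    ∃ c : Sym2 V → ℕ, G.IsKColorConnecting k c ∧ (c '' G.edgeSet).ncard = G.ccConn k :=
  by
  obtain ⟨c, hc⟩ := hG
  exact Nat.sInf_mem (s := {n | ∃ c : Sym2 V → ℕ, G.IsKColorConnecting k c ∧
    (c '' G.edgeSet).ncard = n}) ⟨_, c, hc, rfl⟩

theorem kColorConnectableWith_ccConn (hE : G.edgeSet.Finite) (hG : G.KColorConnectable k) :
    KColorConnectableWith G k (G.ccConn k) := by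
  obtain ⟨c, hc, hcard⟩ := exists_isKColorConnecting_ncard_eq_ccConn hG
  obtain ⟨f, hf, hinj⟩ : ∃ f : ℕ → ℕ,
      c '' G.edgeSet ⊆ f ⁻¹' Set.Iio (G.ccConn k) ∧ Set.InjOn f (c '' G.edgeSet) := by
    refine (hE.image c).exists_injOn_of_encard_le ?_
    rw [← (hE.image c).cast_ncard_eq, ← (Set.finite_Iio _).cast_ncard_eq, hcard]
    simp
  refine ⟨f ∘ c, isKColorConnecting_of_refines hc fun e he e' he' hfe => ?_,
    fun e he => hf ⟨e, he, rfl⟩⟩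
  exact hinj ⟨e, he, rfl⟩ ⟨e', he', rfl⟩ hfe

theorem ccConn_le_iff (hE : G.edgeSet.Finite) (hG : G.KColorConnectable k) :
    G.ccConn k ≤ n ↔ KColorConnectableWith G k n :=
  ⟨(kColorConnectableWith_ccConn hE hG).mono, KColorConnectableWith.ccConn_le⟩

theorem IsPathConvex.kColorConnectableWith_coe (hH : IsPathConvex H)
    (hG : KColorConnectableWith G k n) : KColorConnectableWith H.coe k n := by
  obtain ⟨c, hc, hlt⟩ := hG
  refine ⟨c ∘ Sym2.map Subtype.val, hH.isKColorConnecting_coe hc, fun e he => hlt _ ?_⟩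
  exact H.edgeSet_subset (H.image_coe_edgeSet_coe ▸ ⟨e, he, rfl⟩)

theorem kColorConnectableWith_of_forall_adj {ι : Type*} {H : ι → G.Subgraph}
    (hG : G.Preconnected) (hdisj : Pairwise fun i j => Disjoint (H i).edgeSet (H j).edgeSet)
    (hcover : ∀ u v : V, G.Adj u v → ∃ i, (H i).Adj u v)
    (hH : ∀ i, KColorConnectableWith (H i).coe k n) : KColorConnectableWith G k n := by
  choose d hd hlt using hH
  obtain ⟨c, hcd⟩ := exists_eqOn_of_pairwise_disjoint_edgeSet hdisj d
  have hc (i) : (H i).coe.IsKColorConnecting k (c ∘ Sym2.map Subtype.val) :=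
    isKColorConnecting_of_refines (hd i) fun e he e' he' h =>
      (hcd i he).symm.trans (h.trans (hcd i he'))
  refine ⟨c, isKColorConnecting_of_forall_adj hG fun u v huv => ?_, fun e => ?_⟩
  · obtain ⟨i, hi⟩ := hcover u v huv
    exact ⟨H i, hi, hc i⟩
  · induction e with
    | _ u v =>
      intro huv
      obtain ⟨i, hi⟩ := hcover u v huv
      let e : Sym2 (H i).verts := s(⟨u, hi.fst_mem⟩, ⟨v, hi.snd_mem⟩)
      have he : e ∈ (H i).coe.edgeSet := hi
      exact (hcd i he).trans_lt (hlt i e he)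

theorem kColorConnectableWith_iff_forall_block [Finite V] {ι : Type*} {B : ι → G.Subgraph}
    (hG : G.Preconnected) (hB : ∀ i, G.IsBlock (B i)) (hinj : Function.Injective B)
    (hall : ∀ B' : G.Subgraph, G.IsBlock B' → ∃ i, B' = B i) :
    KColorConnectableWith G k n ↔ ∀ i, KColorConnectableWith (B i).coe k n := by
  simp only [isBlock_iff_maximal_isNonseparable] at hB hall
  refine ⟨fun h i => (isPathConvex_of_maximal_isNonseparable (hB i)).kColorConnectableWith_coe h,
    kColorConnectableWith_of_forall_adj hG ?_ fun u v huv => ?_⟩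
  · exact fun i j hij =>
      disjoint_edgeSet_of_maximal_isNonseparable (hB i) (hB j) (hinj.ne hij)
  · obtain ⟨H, hH, huvH⟩ := exists_maximal_isNonseparable_adj huv
    obtain ⟨i, rfl⟩ := hall H hH
    exact ⟨i, huvH⟩

end

theorem stmt_2 {V : Type*} [Fintype V] (G : SimpleGraph V) (hG : G.Connected)
    (k t : ℕ) (hk : 2 ≤ k) (ht : 0 < t) (B : Fin t → G.Subgraph)
    (hB : ∀ i, G.IsBlock (B i)) (hinj : Function.Injective B)
    (hall : ∀ B' : G.Subgraph, G.IsBlock B' → ∃ i, B' = B i) :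
    (G.KColorConnectable k ↔ ∀ i, (B i).coe.KColorConnectable k) ∧
    (G.KColorConnectable k →
      G.ccConn k = Finset.univ.sup fun i => (B i).coe.ccConn k) := by
  have hwith (n : ℕ) : KColorConnectableWith G k n ↔
      ∀ i, KColorConnectableWith (B i).coe k n :=
    kColorConnectableWith_iff_forall_block hG.preconnected hB hinj hall
  have hiff : G.KColorConnectable k ↔ ∀ i, (B i).coe.KColorConnectable k := by
    refine ⟨fun h i => ?_, fun h => ?_⟩
    · exact ((hwith _).1 (kColorConnectableWith_ccConn (Set.toFinite _) h) i).kColorConnectable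
    · have hmax (i) : (B i).coe.ccConn k ≤ Finset.univ.sup fun j => (B j).coe.ccConn k :=
        Finset.le_sup (f := fun j => (B j).coe.ccConn k) (Finset.mem_univ i)
      exact ((hwith _).2 fun i => (kColorConnectableWith_ccConn (Set.toFinite _) (h i)).mono
        (hmax i)).kColorConnectable
  refine ⟨hiff, fun h => eq_of_forall_ge_iff fun n => ?_⟩
  rw [ccConn_le_iff (Set.toFinite _) h, hwith, Finset.sup_le_iff]
  simp only [Finset.mem_univ, forall_const,
    fun i => ccConn_le_iff (n := n) (Set.toFinite _) (hiff.1 h i)]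
end

section
/- Let k ≥ 2 and let G be a finite 2-connected simple graph that contains a cycle of length at least 2k. Then G is k-color connectable and cc_k(G) = k. -/
open SimpleGraph

/-!
Color the edges of the cycle by their position modulo `k`. Two distinct vertices of the cycle cut
it into two arcs, and one of them receives all `k` colors: if color `b` is missing from one arc,
then the edges number `b` and `b + k` both lie on the other, which therefore contains all the edges
between them in one of the two directions, and either way these carry every color.

Take a maximal set `M` that contains the cycle and any two vertices of which are joined inside `M`
by a path with all `k` colors. If `M` missed a vertex, there would be a path `q` with distinct ends
in `M` that leaves `M`, because no vertex separates the graph. But `M` together with `q` still has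
the property: any two of its vertices are carried to distinct vertices of `M` by disjoint pieces
of `q`, possibly trivial ones.
-/

namespace ColorConnection

open Set

variable {V : Type*} {G : SimpleGraph V}

section CyclicColoring

variable {β : Type*} {k : ℕ} {l l₁ l₂ l₃ : List β}

lemma exists_eq_append_of_append_isRotated (h : (l₁ ++ l₂) ~r l) :
    ∃ s t, l = s ++ l₁ ++ t ∧ l₂ = t ++ s ∨ l = s ++ l₂ ++ t ∧ l₁ = t ++ s := by
  obtain ⟨n, hn, rfl⟩ := List.isRotated_iff_mod.1 h
  rw [List.rotate_eq_drop_append_take hn, List.drop_append, List.take_append]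
  rcases le_total n l₁.length with hn₁ | hn₁
  · refine ⟨l₁.drop n, l₁.take n, .inr ⟨?_, (l₁.take_append_drop n).symm⟩⟩
    simp [Nat.sub_eq_zero_of_le hn₁]
  · refine ⟨l₂.drop (n - l₁.length), l₂.take (n - l₁.length), .inl ⟨?_, ?_⟩⟩
    · simp [List.drop_eq_nil_of_le hn₁, List.take_of_length_le hn₁]
    · exact (l₂.take_append_drop _).symm

variable [DecidableEq β]

/-- The coloring of the members of a list by their position modulo `k`; for the edge list of a
cycle this colors the edges cyclically. Everything outside the list gets the color of the position
just past its end. -/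
def positionColoring (k : ℕ) (l : List β) (e : β) : ℕ := l.idxOf e % k

lemma positionColoring_getElem (hl : l.Nodup) {m : ℕ} (hm : m < l.length) :
    positionColoring k l l[m] = m % k := by
  rw [positionColoring, hl.idxOf_getElem]

lemma Iio_subset_positionColoring_image_middle_or_outer (hnodup : (l₁ ++ l₂ ++ l₃).Nodup)
    (hlen : 2 * k ≤ (l₁ ++ l₂ ++ l₃).length) :
    Iio k ⊆ positionColoring k (l₁ ++ l₂ ++ l₃) '' {e | e ∈ l₂} ∨
      Iio k ⊆ positionColoring k (l₁ ++ l₂ ++ l₃) '' {e | e ∈ l₁ ++ l₃} := by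
  by_contra! h
  simp only [not_subset, mem_Iio, mem_image, mem_ofPred_eq, not_exists, not_and] at h
  obtain ⟨⟨a, hak, ha⟩, b, hbk, hb⟩ := h
  have ha_outer {m : ℕ} (hm : m < 2 * k) (hma : m % k = a) :
      m < l₁.length ∨ l₁.length + l₂.length ≤ m := by
    by_contra! hmid
    exact ha (l₁ ++ l₂ ++ l₃)[m] (by grind) ((positionColoring_getElem hnodup _).trans hma)
  have hb_middle {m : ℕ} (hm : m < 2 * k) (hmb : m % k = b) :
      l₁.length ≤ m ∧ m < l₁.length + l₂.length := by
    by_contra hout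
    exact hb (l₁ ++ l₂ ++ l₃)[m] (by grind) ((positionColoring_getElem hnodup _).trans hmb)
  have ha₀ := ha_outer (by lia) (Nat.mod_eq_of_lt hak)
  have ha₁ := ha_outer (by lia) (Nat.add_mod_right a k ▸ Nat.mod_eq_of_lt hak)
  have hb₀ := hb_middle (by lia) (Nat.mod_eq_of_lt hbk)
  have hb₁ := hb_middle (by lia) (Nat.add_mod_right b k ▸ Nat.mod_eq_of_lt hbk)
  lia

lemma Iio_subset_positionColoring_image_left_or_right (hnodup : l.Nodup)
    (hlen : 2 * k ≤ l.length) (h : (l₁ ++ l₂) ~r l) :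
    Iio k ⊆ positionColoring k l '' {e | e ∈ l₁} ∨
      Iio k ⊆ positionColoring k l '' {e | e ∈ l₂} := by
  obtain ⟨s, t, ⟨rfl, rfl⟩ | ⟨rfl, rfl⟩⟩ := exists_eq_append_of_append_isRotated h
  · simpa only [List.mem_append, or_comm] using
      Iio_subset_positionColoring_image_middle_or_outer hnodup hlen
  · simpa only [List.mem_append, or_comm] using
      (Iio_subset_positionColoring_image_middle_or_outer hnodup hlen).symm

end CyclicColoring

section Paths

variable {S : Set V} {s t x y z : V}

lemma eq_of_mem_support_of_append_isPath {p : G.Walk x y} {q : G.Walk y t}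
    (h : (p.append q).IsPath) (hp : z ∈ p.support) (hq : z ∈ q.support) : z = y :=
  by_contra fun hzy => h.ne_of_mem_support_of_append hzy hp hq rfl

lemma append_isPath {p : G.Walk x y} {q : G.Walk y t} (hp : p.IsPath) (hq : q.IsPath)
    (h : ∀ z ∈ p.support, z ∈ q.support → z = y) : (p.append q).IsPath := by
  rw [Walk.isPath_def, Walk.support_append, List.nodup_append']
  have hq' : (y :: q.support.tail).Nodup := by simpa using hq.support_nodup
  refine ⟨hp.support_nodup, hq'.of_cons, fun z hzp hzq => ?_⟩
  exact (List.nodup_cons.1 hq').1 (h z hzp (List.mem_of_mem_tail hzq) ▸ hzq)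

lemma exists_isPath_to_set (p : G.Walk x s) (hs : s ∈ S) :
    ∃ t ∈ S, ∃ q : G.Walk x t, q.IsPath ∧ q.support ⊆ p.support ∧
      ∀ z ∈ q.support, z ∈ S → z = t := by
  classical
  obtain ⟨t, ht, htp, h⟩ := p.exists_mem_support_forall_mem_support_imp_eq
    (p.support.toFinset.filter (· ∈ S)) ⟨s, by simp [hs]⟩
  have hsub := p.support_takeUntil_subset_support htp
  have hbypass := (p.takeUntil t htp).support_bypass_subset_support
  refine ⟨t, (Finset.mem_filter.1 ht).2, (p.takeUntil t htp).bypass, Walk.bypass_isPath _,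
    fun z hz => hsub (hbypass hz), ?_⟩
  intro z hz hzS
  exact h z (by simpa using ⟨hsub (hbypass hz), hzS⟩) (hbypass hz)

lemma mem_support_dropUntil_or_mem_support_dropUntil [DecidableEq V] {q : G.Walk s t}
    (hx : x ∈ q.support) (hy : y ∈ q.support) :
    y ∈ (q.dropUntil x hx).support ∨ x ∈ (q.dropUntil y hy).support := by
  by_contra! h
  have hyx : y ∈ (q.takeUntil x hx).support :=
    ((Walk.mem_support_append_iff _ _).1 ((q.take_spec hx).symm ▸ hy)).resolve_right h.1
  have hxy : x ∈ (q.takeUntil y hy).support :=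
    ((Walk.mem_support_append_iff _ _).1 ((q.take_spec hy).symm ▸ hx)).resolve_right h.2
  have hne : y ≠ x := by
    rintro rfl
    exact h.1 (Walk.start_mem_support _)
  exact Walk.notMem_support_takeUntil_support_takeUntil_subset hne hx hyx hxy

lemma exists_disjoint_walks_to_ends {q : G.Walk s t} (hq : q.IsPath) (hs : s ∈ S) (ht : t ∈ S)
    (hx : x ∈ q.support) (hy : y ∈ q.support) (hxy : x ≠ y) :
    ∃ a ∈ S, ∃ b ∈ S, ∃ (A : G.Walk x a) (B : G.Walk y b),
      A.support ⊆ q.support ∧ B.support ⊆ q.support ∧ A.support.Disjoint B.support := by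
  classical
  wlog hyx : y ∈ (q.dropUntil x hx).support generalizing x y
  · have hxy' := (mem_support_dropUntil_or_mem_support_dropUntil hx hy).resolve_left hyx
    obtain ⟨a, ha, b, hb, A, B, hA, hB, hAB⟩ := this hy hx hxy.symm hxy'
    exact ⟨b, hb, a, ha, B, A, hB, hA, hAB.symm⟩
  have hB := (q.dropUntil x hx).support_dropUntil_subset_support hyx
  refine ⟨s, hs, t, ht, (q.takeUntil x hx).reverse, (q.dropUntil x hx).dropUntil y hyx, ?_,
    fun z hz => q.support_dropUntil_subset_support hx (hB hz), fun z hzA hzB => ?_⟩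
  · simpa using q.support_takeUntil_subset_support hx
  · obtain rfl : z = x := eq_of_mem_support_of_append_isPath ((q.take_spec hx).symm ▸ hq)
      (by simpa using hzA) (hB hzB)
    exact hxy (eq_of_mem_support_of_append_isPath
      (((q.dropUntil z hx).take_spec hyx).symm ▸ hq.dropUntil hx) (Walk.start_mem_support _) hzB)

lemma exists_walk_notMem_support {v : V} (hG : (G.induce {v}ᶜ).Preconnected) (hx : x ≠ v)
    (hy : y ≠ v) : ∃ p : G.Walk x y, v ∉ p.support := by
  obtain ⟨p⟩ := hG ⟨x, hx⟩ ⟨y, hy⟩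
  refine ⟨p.map (Embedding.induce {v}ᶜ).toHom, fun hv => ?_⟩
  obtain ⟨w, -, hw⟩ := List.mem_map.1 (Walk.support_map _ p ▸ hv)
  exact w.2 hw

lemma exists_isPath_not_subset (hG : ∀ v, (G.induce {v}ᶜ).Preconnected) (hS : S.Nontrivial)
    (hne : S ≠ univ) :
    ∃ s ∈ S, ∃ t ∈ S, ∃ q : G.Walk s t, q.IsPath ∧ ∃ z ∈ q.support, z ∉ S := by
  classical
  obtain ⟨w, hw⟩ := (ne_univ_iff_exists_notMem S).1 hne
  have ⟨a, ha, b, hb, hab⟩ := hS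
  obtain ⟨p, -⟩ := exists_walk_notMem_support (hG b) hab (ne_of_mem_of_not_mem hb hw).symm
  obtain ⟨d, -, hd, hd'⟩ := p.exists_boundary_dart S ha hw
  obtain ⟨t, ht, htd⟩ := hS.exists_ne d.fst
  obtain ⟨r, hr⟩ := exists_walk_notMem_support (hG d.fst) d.adj.ne' htd
  refine ⟨d.fst, hd, t, ht, .cons d.adj r.bypass, ?_, d.snd, by simp, hd'⟩
  exact r.bypass_isPath.cons fun h => hr (r.support_bypass_subset_support h)

end Paths

section ColorLinked

variable {α : Type*} {f : Sym2 V → α} {C : Set α} {S T : Set V} {s t x y : V}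

/-- `x` and `y` are joined by a path of `G` that stays inside `S` and on whose edges the coloring
`f` takes all the colors in `C`. -/
def ColorLinked (G : SimpleGraph V) (f : Sym2 V → α) (C : Set α) (S : Set V) (x y : V) : Prop :=
  ∃ p : G.Walk x y, p.IsPath ∧ (∀ z ∈ p.support, z ∈ S) ∧ C ⊆ f '' p.edgeSet

lemma ColorLinked.mono (hST : S ⊆ T) (h : ColorLinked G f C S x y) : ColorLinked G f C T x y :=
  let ⟨p, hp, hpS, hpC⟩ := h
  ⟨p, hp, fun z hz => hST (hpS z hz), hpC⟩

lemma colorLinked_of_disjoint_walks (hS : S.Pairwise (ColorLinked G f C S)) (hST : S ⊆ T)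
    (hs : s ∈ S) (ht : t ∈ S) {A : G.Walk x s} {B : G.Walk y t} (hA : ∀ z ∈ A.support, z ∈ T)
    (hB : ∀ z ∈ B.support, z ∈ T) (hAB : A.support.Disjoint B.support) :
    ColorLinked G f C T x y := by
  obtain ⟨s', hs', A', hA', hAA', hA'S⟩ := exists_isPath_to_set A hs
  obtain ⟨t', ht', B', hB', hBB', hB'S⟩ := exists_isPath_to_set B ht
  have hdisj : A'.support.Disjoint B'.support := fun z hzA hzB => hAB (hAA' hzA) (hBB' hzB)
  have hst' : s' ≠ t' := fun h => hdisj A'.end_mem_support (h ▸ B'.end_mem_support)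
  obtain ⟨p, hp, hpS, hpC⟩ := hS hs' ht' hst'
  have hpB : (p.append B'.reverse).IsPath :=
    append_isPath hp hB'.reverse fun z hzp hzB => hB'S z (by simpa using hzB) (hpS z hzp)
  refine ⟨A'.append (p.append B'.reverse), append_isPath hA' hpB fun z hzA hz => ?_,
    fun z hz => ?_, hpC.trans (image_mono ?_)⟩
  · rcases (Walk.mem_support_append_iff _ _).1 hz with hzp | hzB
    · exact hA'S z hzA (hpS z hzp)
    · exact (hdisj hzA (by simpa using hzB)).elim
  · simp only [Walk.mem_support_append_iff, Walk.support_reverse, List.mem_reverse] at hz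
    rcases hz with hzA | hzp | hzB
    exacts [hA z (hAA' hzA), hST (hpS z hzp), hB z (hBB' hzB)]
  · simp only [Walk.edgeSet_append]
    exact subset_union_left.trans subset_union_right

lemma pairwise_colorLinked_union_support (hS : S.Pairwise (ColorLinked G f C S)) (hs : s ∈ S)
    (ht : t ∈ S) {q : G.Walk s t} (hq : q.IsPath) :
    (S ∪ {z | z ∈ q.support}).Pairwise (ColorLinked G f C (S ∪ {z | z ∈ q.support})) := by
  classical
  set T := S ∪ {z | z ∈ q.support}
  intro x hx y hy hxy
  suffices ∃ a ∈ S, ∃ b ∈ S, ∃ (A : G.Walk x a) (B : G.Walk y b),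
      (∀ z ∈ A.support, z ∈ T) ∧ (∀ z ∈ B.support, z ∈ T) ∧ A.support.Disjoint B.support by
    obtain ⟨a, ha, b, hb, A, B, hA, hB, hAB⟩ := this
    exact colorLinked_of_disjoint_walks hS subset_union_left ha hb hA hB hAB
  have to_start {v : V} (hv : v ∈ q.support) :
      (q.takeUntil v hv).reverse.support ⊆ q.support := by
    simpa using q.support_takeUntil_subset_support hv
  by_cases hxq : x ∈ q.support <;> by_cases hyq : y ∈ q.support
  · obtain ⟨a, ha, b, hb, A, B, hA, hB, hAB⟩ :=
      exists_disjoint_walks_to_ends hq hs ht hxq hyq hxy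
    exact ⟨a, ha, b, hb, A, B, fun z hz => .inr (hA hz), fun z hz => .inr (hB hz), hAB⟩
  · refine ⟨s, hs, y, hy.resolve_right hyq, (q.takeUntil x hxq).reverse, .nil,
      fun z hz => .inr (to_start hxq hz), by simpa, ?_⟩
    simpa using fun h => hyq (q.support_takeUntil_subset_support hxq h)
  · refine ⟨x, hx.resolve_right hxq, s, hs, .nil, (q.takeUntil y hyq).reverse,
      by simpa, fun z hz => .inr (to_start hyq hz), ?_⟩
    simpa using fun h => hxq (q.support_takeUntil_subset_support hyq h)
  · exact ⟨x, hx.resolve_right hxq, y, hy.resolve_right hyq, .nil, .nil, by simpa, by simpa,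
      by simpa using hxy.symm⟩

lemma exists_maximal_pairwise_colorLinked (hS : S.Pairwise (ColorLinked G f C S)) :
    ∃ M, S ⊆ M ∧ Maximal (fun T => T.Pairwise (ColorLinked G f C T)) M := by
  refine zorn_subset_nonempty {T | T.Pairwise (ColorLinked G f C T)} (fun c hc hchain _ => ?_) S hS
  refine ⟨⋃₀ c, ?_, fun T => subset_sUnion_of_mem⟩
  refine (pairwise_sUnion hchain.directedOn).2 fun T hT => ?_
  exact (hc hT).mono' fun _ _ => .mono (subset_sUnion_of_mem hT)

lemma pairwise_colorLinked_univ (hG : ∀ v, (G.induce {v}ᶜ).Preconnected)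
    (hS : S.Pairwise (ColorLinked G f C S)) (hnt : S.Nontrivial) :
    Pairwise (ColorLinked G f C univ) := by
  obtain ⟨M, hSM, hM⟩ := exists_maximal_pairwise_colorLinked hS
  suffices M = univ from pairwise_univ.1 (this ▸ hM.prop)
  by_contra hne
  obtain ⟨s, hs, t, ht, q, hq, z, hz, hzM⟩ := exists_isPath_not_subset hG (hnt.mono hSM) hne
  have hMq := pairwise_colorLinked_union_support hM.prop hs ht hq
  exact hzM (hM.le_of_ge hMq subset_union_left (.inr hz))

end ColorLinked

section Cycle

variable {k : ℕ} {u : V} {c : G.Walk u u}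

lemma nontrivial_support_of_isCycle (hc : c.IsCycle) :
    {z | z ∈ c.support}.Nontrivial :=
  ⟨u, c.start_mem_support, c.snd, by simp, (c.adj_snd hc.not_nil).ne⟩

lemma pairwise_colorLinked_cycle [DecidableEq V] (hc : c.IsCycle) (hlen : 2 * k ≤ c.length) :
    {z | z ∈ c.support}.Pairwise
      (ColorLinked G (positionColoring k c.edges) (Iio k) {z | z ∈ c.support}) := by
  intro x hx y hy hxy
  have hy' : y ∈ (c.rotate x hx).support := by simpa using hy
  set p := (c.rotate x hx).takeUntil y hy'
  set q := (c.rotate x hx).dropUntil y hy'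
  have hpq : p.append q = c.rotate x hx := Walk.take_spec _ hy'
  have hcycle : (p.append q).IsCycle := hpq ▸ hc.rotate hx
  have hsupp {z : V} : z ∈ p.support ∨ z ∈ q.support ↔ z ∈ c.support := by
    rw [← Walk.mem_support_append_iff, hpq, Walk.mem_support_rotate_iff]
  have hrot : (p.edges ++ q.edges) ~r c.edges := by
    rw [← Walk.edges_append, hpq]
    exact c.rotate_edges x hx
  rcases Iio_subset_positionColoring_image_left_or_right hc.edges_nodup
    (hlen.trans_eq c.length_edges.symm) hrot with hpk | hqk
  · exact ⟨p, hcycle.isPath_of_append_left (Walk.not_nil_of_ne hxy.symm),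
      fun z hz => hsupp.1 (.inl hz), hpk⟩
  · refine ⟨q.reverse, (hcycle.isPath_of_append_right (Walk.not_nil_of_ne hxy)).reverse,
      fun z hz => hsupp.1 (.inr (by simpa using hz)), ?_⟩
    rwa [Walk.edgeSet_reverse]

end Cycle

section ColorCount

variable {k : ℕ} {f : Sym2 V → ℕ}

lemma isKColorConnecting_of_pairwise_colorLinked
    (h : Pairwise (ColorLinked G f (Iio k) univ)) : G.IsKColorConnecting k f := by
  intro x y hxy
  obtain ⟨p, hp, -, hpk⟩ := h hxy
  refine ⟨p, hp, ?_⟩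
  have hrange : Finset.range k ⊆ (p.edges.map f).toFinset := fun a ha => by
    simpa using hpk (Finset.mem_range.1 ha)
  simpa using Finset.card_le_card hrange

lemma le_encard_image_edgeSet [Nontrivial V] (h : G.IsKColorConnecting k f) :
    k ≤ (f '' G.edgeSet).encard := by
  obtain ⟨x, y, hxy⟩ := exists_pair_ne V
  obtain ⟨p, -, hp⟩ := h x y hxy
  calc (k : ℕ∞) ≤ ((p.edges.map f).toFinset.card : ℕ∞) := by exact_mod_cast hp
    _ = (f '' p.edgeSet).encard := by
      rw [← encard_coe_eq_coe_finsetCard]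
      congr 1
      ext
      simp
    _ ≤ (f '' G.edgeSet).encard :=
      encard_le_encard (image_mono fun e he => p.edges_subset_edgeSet he)

lemma kColorConnectable_and_ccConn_eq_of_isLeast [Finite V] {n : ℕ}
    (h : IsLeast {m : ℕ∞ | ∃ f, G.IsKColorConnecting k f ∧ (f '' G.edgeSet).encard = m} n) :
    G.KColorConnectable k ∧ G.ccConn k = n := by
  have hcast (f : Sym2 V → ℕ) : ((f '' G.edgeSet).ncard : ℕ∞) = (f '' G.edgeSet).encard :=
    (toFinite _).cast_ncard_eq
  obtain ⟨⟨f, hf, hfn⟩, hmin⟩ := h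
  refine ⟨⟨f, hf⟩, IsLeast.csInf_eq ⟨⟨f, hf, ?_⟩, ?_⟩⟩
  · exact_mod_cast (hcast f).trans hfn
  · rintro _ ⟨g, hg, rfl⟩
    exact_mod_cast (hmin ⟨g, hg, rfl⟩).trans_eq (hcast g).symm

end ColorCount

end ColorConnection

-- `encard`, because `ncard` would count a coloring with infinitely many colors as using none.
open ColorConnection Set in
theorem stmt_4_general {V : Type*} (G : SimpleGraph V) {k : ℕ} (hk : k ≠ 0)
    (hG : ∀ v, (G.induce {v}ᶜ).Preconnected) {u : V} {c : G.Walk u u} (hc : c.IsCycle)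
    (hlen : 2 * k ≤ c.length) :
    IsLeast {m : ℕ∞ | ∃ f, G.IsKColorConnecting k f ∧ (f '' G.edgeSet).encard = m} k := by
  classical
  set f := positionColoring k c.edges
  have hnt : {z | z ∈ c.support}.Nontrivial := nontrivial_support_of_isCycle hc
  have : Nontrivial V := nontrivial_of_nontrivial hnt
  have hf : G.IsKColorConnecting k f := isKColorConnecting_of_pairwise_colorLinked
    (pairwise_colorLinked_univ hG (pairwise_colorLinked_cycle hc hlen) hnt)
  have hfk : f '' G.edgeSet ⊆ Iio k :=
    image_subset_iff.2 fun e _ => Nat.mod_lt _ (Nat.pos_of_ne_zero hk)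
  have hle : (f '' G.edgeSet).encard ≤ k :=
    (encard_le_encard hfk).trans_eq (Nat.encard_range k)
  refine ⟨⟨f, hf, hle.antisymm (le_encard_image_edgeSet hf)⟩, ?_⟩
  rintro _ ⟨g, hg, rfl⟩
  exact le_encard_image_edgeSet hg

theorem stmt_4 {V : Type*} [Fintype V] (G : SimpleGraph V) (k : ℕ) (hk : 2 ≤ k)
    (hG : G.IsTwoConnected) (u : V) (c : G.Walk u u) (hc : c.IsCycle)
    (hlen : 2 * k ≤ c.length) :
    G.KColorConnectable k ∧ G.ccConn k = k :=
  ColorConnection.kColorConnectable_and_ccConn_eq_of_isLeast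
    (stmt_4_general G (by lia) (fun v => (hG.2.2 v).preconnected) hc hlen)
end

section
/- Let k ≥ 2, let G be a finite simple graph, and let G' be obtained from G by subdividing a single edge uv (i.e., deleting uv and adding a new vertex w together with the edges uw and wv). If G is k-color connectable, then G' is k-color connectable and cc_k(G') ≤ cc_k(G). -/
open SimpleGraph

/-- The graph obtained from `G` by subdividing the edge `uv`: delete `uv` and add a new
vertex `none` joined to `u` and `v`. -/
def SimpleGraph.subdivideEdge {V : Type*} (G : SimpleGraph V) (u v : V) :
    SimpleGraph (Option V) :=
  ((G.deleteEdges {s(u, v)}).map Function.Embedding.some) ⊔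
    SimpleGraph.fromEdgeSet {s(none, some u), s(none, some v)}

/-- `IsSubdivision G H` : `H` is (up to isomorphism) obtained from `G` by a finite,
possibly empty, sequence of single-edge subdivisions. -/
inductive IsSubdivision : ∀ {V W : Type u}, SimpleGraph V → SimpleGraph W → Prop
  | of_iso {V W : Type u} {G : SimpleGraph V} {H : SimpleGraph W} :
      Nonempty (G ≃g H) → IsSubdivision G H
  | step {V W : Type u} {G : SimpleGraph V} {H : SimpleGraph W} (u v : V) (h : G.Adj u v) :
      IsSubdivision (G.subdivideEdge u v) H → IsSubdivision G H

/-!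
Send every edge of the subdivision to the edge of `G` it lies on, so that both halves of the
subdivided edge `uv` go to `uv`, and pull colorings of `G` back along this map. The colors used are
the same. A path of `G` between old vertices becomes, after a detour through the new vertex `w` if
it uses `uv`, a path of the subdivision lying over the same edges. For a path from `w` to an old
vertex `x`, take a path `p` of `G` from an end `a ≠ x` of `uv` to `x`: if `p` uses `uv` then it does
so in its first step, and starting the detour at `w` keeps the half of `uv` that follows `w`;
otherwise the step from `w` to `a` can be put in front.
-/

section

variable {V : Type*} {G : SimpleGraph V} {u v : V}

lemma subdivideEdge_adj_none_some {x : V} :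
    (G.subdivideEdge u v).Adj none (some x) ↔ x ∈ s(u, v) := by
  simp [SimpleGraph.subdivideEdge, SimpleGraph.map_adj']

lemma subdivideEdge_adj_some_some {x y : V} :
    (G.subdivideEdge u v).Adj (some x) (some y) ↔ G.Adj x y ∧ s(x, y) ≠ s(u, v) := by
  simpa [SimpleGraph.subdivideEdge, SimpleGraph.map_adj'] using fun h _ _ => h.ne

/-- The edge of `G` on which an edge of `G.subdivideEdge u v` lies: both edges at the new vertex
`none` lie on `s(u, v)`. -/
def originalEdge (u v : V) : Sym2 (Option V) → Sym2 V :=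
  Sym2.lift ⟨fun
    | some x, some y => s(x, y)
    | _, _ => s(u, v), by rintro (_ | x) (_ | y) <;> simp [Sym2.eq_swap]⟩

@[simp]
lemma originalEdge_some_some (x y : V) : originalEdge u v s(some x, some y) = s(x, y) :=
  rfl

@[simp]
lemma originalEdge_none_left (x : Option V) : originalEdge u v s(none, x) = s(u, v) :=
  rfl

@[simp]
lemma originalEdge_none_right (x : Option V) : originalEdge u v s(x, none) = s(u, v) := by
  rw [Sym2.eq_swap, originalEdge_none_left]

lemma image_originalEdge_edgeSet (huv : G.Adj u v) :
    originalEdge u v '' (G.subdivideEdge u v).edgeSet = G.edgeSet := by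
  apply Set.Subset.antisymm
  · rintro _ ⟨⟨x | x, y | y⟩, he, rfl⟩
    · exact huv
    · exact huv
    · simpa using huv
    · exact (subdivideEdge_adj_some_some.mp he).1
  · rintro ⟨x, y⟩ he
    by_cases hxy : s(x, y) = s(u, v)
    · exact ⟨s(none, some u), subdivideEdge_adj_none_some.mpr (by simp), hxy.symm⟩
    · exact ⟨s(some x, some y), subdivideEdge_adj_some_some.mpr ⟨he, hxy⟩, rfl⟩

open Classical in
/-- The walk of `G.subdivideEdge u v` that follows a walk of `G`, making a detour through the new
vertex `none` whenever the walk of `G` traverses `s(u, v)`. -/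
noncomputable def subdivideWalk (u v : V) :
    ∀ {a b : V}, G.Walk a b → (G.subdivideEdge u v).Walk (some a) (some b)
  | _, _, .nil => .nil
  | _, _, .cons (u := a) (v := y) h p =>
    if he : s(a, y) = s(u, v) then
      .cons (subdivideEdge_adj_none_some.mpr (he ▸ Sym2.mem_mk_left a y)).symm
        (.cons (subdivideEdge_adj_none_some.mpr (he ▸ Sym2.mem_mk_right a y)) (subdivideWalk u v p))
    else
      .cons (subdivideEdge_adj_some_some.mpr ⟨h, he⟩) (subdivideWalk u v p)

lemma reduceOption_support_subdivideWalk {a b : V} (p : G.Walk a b) :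
    (subdivideWalk u v p).support.reduceOption = p.support := by
  induction p with
  | nil => simp [subdivideWalk]
  | cons _ p ih => rw [subdivideWalk]; split_ifs <;> simp [ih]

lemma some_mem_support_subdivideWalk {a b x : V} (p : G.Walk a b) :
    some x ∈ (subdivideWalk u v p).support ↔ x ∈ p.support := by
  rw [← List.reduceOption_mem_iff, reduceOption_support_subdivideWalk]

lemma none_mem_support_subdivideWalk {a b : V} (p : G.Walk a b) :
    none ∈ (subdivideWalk u v p).support ↔ s(u, v) ∈ p.edges := by
  induction p with
  | nil => simp [subdivideWalk]
  | cons _ p ih =>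
    rw [subdivideWalk]
    split_ifs with he
    · simp [he]
    · simp [ih, Ne.symm he]

lemma edges_subset_map_edges_subdivideWalk {a b : V} (p : G.Walk a b) :
    p.edges ⊆ (subdivideWalk u v p).edges.map (originalEdge u v) := by
  induction p with
  | nil => simp
  | cons _ p ih =>
    rw [subdivideWalk]
    split_ifs with he
    · simpa [he] using List.subset_cons_of_subset _ (List.subset_cons_of_subset _ ih)
    · simpa using List.subset_cons_of_subset _ ih

lemma isPath_subdivideWalk {a b : V} {p : G.Walk a b} (hp : p.IsPath) :
    (subdivideWalk u v p).IsPath := by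
  induction p with
  | nil => simp [subdivideWalk]
  | @cons a y _ _ p ih =>
    rw [Walk.cons_isPath_iff] at hp
    have ha : some a ∉ (subdivideWalk u v p).support :=
      (some_mem_support_subdivideWalk p).not.mpr hp.2
    rw [subdivideWalk]
    split_ifs with he
    · have hnone : none ∉ (subdivideWalk u v p).support := by
        rw [none_mem_support_subdivideWalk, ← he]
        exact fun hmem => hp.2 (p.fst_mem_support_of_mem_edges hmem)
      simp [Walk.cons_isPath_iff, ih hp.1, ha, hnone]
    · exact (ih hp.1).cons ha

lemma exists_isPath_from_none_edges_subset {a b : V} (ha : a ∈ s(u, v)) {p : G.Walk a b}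
    (hp : p.IsPath) :
    ∃ q : (G.subdivideEdge u v).Walk none (some b),
      q.IsPath ∧ p.edges ⊆ q.edges.map (originalEdge u v) := by
  by_cases hmem : s(u, v) ∈ p.edges
  · cases p with
    | nil => simp at hmem
    | @cons _ y _ _ p =>
      rw [Walk.cons_isPath_iff] at hp
      have hnot_mem : s(u, v) ∉ p.edges := fun huv => hp.2 (p.mem_support_of_mem_edges huv ha)
      have he : s(a, y) = s(u, v) := by
        simpa [hnot_mem, eq_comm] using hmem
      have hy : y ∈ s(u, v) := he ▸ Sym2.mem_mk_right a y
      refine ⟨.cons (subdivideEdge_adj_none_some.mpr hy) (subdivideWalk u v p),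
        (isPath_subdivideWalk hp.1).cons ((none_mem_support_subdivideWalk p).not.mpr hnot_mem), ?_⟩
      simpa [he] using
        List.subset_cons_of_subset _ (edges_subset_map_edges_subdivideWalk p)
  · exact ⟨.cons (subdivideEdge_adj_none_some.mpr ha) (subdivideWalk u v p),
      (isPath_subdivideWalk hp).cons ((none_mem_support_subdivideWalk p).not.mpr hmem),
      List.subset_cons_of_subset _ (edges_subset_map_edges_subdivideWalk p)⟩

lemma card_toFinset_map_le_of_subset_map {α β γ : Type*} [DecidableEq γ] {l : List α} {m : List β}
    {f : β → α} (h : l ⊆ m.map f) (c : α → γ) :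
    (l.map c).toFinset.card ≤ (m.map (c ∘ f)).toFinset.card := by
  have hsub : l.map c ⊆ m.map (c ∘ f) := by
    simpa only [List.map_map] using List.map_subset c h
  exact Finset.card_le_card fun _ hx =>
    List.mem_toFinset.mpr (hsub (List.mem_toFinset.mp hx))

theorem isKColorConnecting_comp_originalEdge (huv : G.Adj u v) {k : ℕ} {c : Sym2 V → ℕ}
    (hc : G.IsKColorConnecting k c) :
    (G.subdivideEdge u v).IsKColorConnecting k (c ∘ originalEdge u v) := by
  have path_from_none (x : V) : ∃ q : (G.subdivideEdge u v).Walk none (some x), q.IsPath ∧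
      k ≤ (q.edges.map (c ∘ originalEdge u v)).toFinset.card := by
    obtain ⟨a, ha, hax⟩ : ∃ a ∈ s(u, v), a ≠ x := by
      rcases ne_or_eq u x with hux | rfl
      · exact ⟨u, Sym2.mem_mk_left u v, hux⟩
      · exact ⟨v, Sym2.mem_mk_right u v, huv.ne'⟩
    obtain ⟨p, hp, hpk⟩ := hc a x hax
    obtain ⟨q, hq, hpq⟩ := exists_isPath_from_none_edges_subset ha hp
    exact ⟨q, hq, hpk.trans (card_toFinset_map_le_of_subset_map hpq c)⟩
  rintro (_ | x) (_ | y) hxy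
  · exact absurd rfl hxy
  · exact path_from_none y
  · obtain ⟨q, hq, hqk⟩ := path_from_none x
    exact ⟨q.reverse, hq.reverse, by simpa using hqk⟩
  · obtain ⟨p, hp, hpk⟩ := hc x y (ne_of_apply_ne some hxy)
    exact ⟨subdivideWalk u v p, isPath_subdivideWalk hp,
      hpk.trans (card_toFinset_map_le_of_subset_map (edges_subset_map_edges_subdivideWalk p) c)⟩

end

theorem stmt_7 {V : Type*} [Fintype V] (G : SimpleGraph V) (k : ℕ) (hk : 2 ≤ k)
    (u v : V) (huv : G.Adj u v) (h : G.KColorConnectable k) :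
    (G.subdivideEdge u v).KColorConnectable k ∧
    (G.subdivideEdge u v).ccConn k ≤ G.ccConn k := by
  obtain ⟨c₀, hc₀⟩ := h
  obtain ⟨c, hc, hcard⟩ : ∃ c : Sym2 V → ℕ,
      G.IsKColorConnecting k c ∧ (c '' G.edgeSet).ncard = G.ccConn k :=
    Nat.sInf_mem (s := {n | ∃ c, G.IsKColorConnecting k c ∧ (c '' G.edgeSet).ncard = n})
      ⟨_, c₀, hc₀, rfl⟩
  have hc' := isKColorConnecting_comp_originalEdge huv hc
  refine ⟨⟨_, hc'⟩, Nat.sInf_le ⟨_, hc', ?_⟩⟩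
  rw [Set.image_comp, image_originalEdge_edgeSet huv, hcard]
end

section
/- For all integers 3 ≤ k ≤ t ≤ n, every wheel-like graph W_n^t satisfies cc_k(W_n^t) = k. -/
open SimpleGraph

/-- `G` is a wheel-like graph `W n t`: it consists of a cycle of length `n` together with
a new vertex `v₀` (not on the cycle) joined to `t` distinct vertices of the cycle by `t`
paths which pairwise share only the vertex `v₀` and are internally disjoint from the
cycle, and `G` has no further vertices or edges. -/
inductive SimpleGraph.IsWheelLike {V : Type*} (G : SimpleGraph V) (n t : ℕ) : Prop
  | mk (v₀ x : V) (c : G.Walk x x) (hc : c.IsCycle) (hn : c.length = n)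
      (a : Fin t → V) (hainj : Function.Injective a) (haC : ∀ i, a i ∈ c.support)
      (p : ∀ i : Fin t, G.Walk v₀ (a i)) (hp : ∀ i, (p i).IsPath)
      (hv₀ : v₀ ∉ c.support)
      (hint : ∀ i, ∀ w ∈ (p i).support, w ≠ v₀ → w ≠ a i → w ∉ c.support)
      (hdisj : ∀ i j, i ≠ j → ∀ w ∈ (p i).support, w ∈ (p j).support → w = v₀)
      (hverts : ∀ w : V, w ∈ c.support ∨ ∃ i, w ∈ (p i).support)
      (hedges : ∀ e : Sym2 V, e ∈ G.edgeSet ↔ e ∈ c.edges ∨ ∃ i, e ∈ (p i).edges) :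
      IsWheelLike G n t

/-!
Give the edges of each spoke a color of its own, and give the rim edge that follows the foot of a
spoke (in a fixed orientation of the rim) the color of that spoke. Any two vertices are then joined
by a path that sees every color. For rim vertices `u` and `v`, if one of the two arcs between them
carries no feet then the other arc will do. Otherwise walk from each of `u` and `v` in the positive
direction up to the last foot before the other vertex, and connect these two feet through the hub:
the two arcs see all the colors but those of the two spokes used. For a vertex of a spoke and a rim
vertex `v`, the spoke used to reach the rim is the one whose foot is the last to be met when going
once around from `v`: the arc from `v` to that foot sees every other color. To reach a second vertex
on a spoke, take for `v` the foot of its spoke and continue from there.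

Identifying colors turns this into a `k`-color connecting coloring with exactly `k` colors, and
fewer colors can never suffice.
-/

section ColorLinked

variable {V κ : Type*} {G : SimpleGraph V} {c : Sym2 V → κ} {S S' : Set V} {L L' : Set κ}
  {u v w : V}

/-- The vertices `u` and `v` are joined by a path of `G` inside `S` on which the coloring `c`
takes every value in `L`. -/
def ColorLinked (G : SimpleGraph V) (c : Sym2 V → κ) (S : Set V) (L : Set κ) (u v : V) : Prop :=
  ∃ p : G.Walk u v, p.IsPath ∧ (∀ w ∈ p.support, w ∈ S) ∧ L ⊆ c '' p.edgeSet

namespace ColorLinked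

theorem refl (hu : u ∈ S) : ColorLinked G c S ∅ u u :=
  ⟨Walk.nil, Walk.IsPath.nil, by simpa using hu, Set.empty_subset _⟩

theorem eq_empty (h : ColorLinked G c S L u u) : L = ∅ := by
  obtain ⟨p, hp, -, hL⟩ := h
  obtain rfl := Walk.eq_nil_iff_nil.mpr (Walk.isPath_iff_nil.mp hp)
  simpa using hL

theorem symm (h : ColorLinked G c S L u v) : ColorLinked G c S L v u := by
  obtain ⟨p, hp, hS, hL⟩ := h
  exact ⟨p.reverse, hp.reverse, by simpa using hS, by simpa using hL⟩

theorem mono (h : ColorLinked G c S L u v) (hS : S ⊆ S') (hL : L' ⊆ L) :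
    ColorLinked G c S' L' u v := by
  obtain ⟨p, hp, hpS, hpL⟩ := h
  exact ⟨p, hp, fun w hw ↦ hS (hpS w hw), hL.trans hpL⟩

theorem of_adj (h : G.Adj u v) : ColorLinked G c {u, v} {c s(u, v)} u v :=
  ⟨h.toWalk, by simp [h.ne], by simp, by simp⟩

theorem trans (h : ColorLinked G c S L u v) (h' : ColorLinked G c S' L' v w)
    (hSS' : S ∩ S' ⊆ {v}) : ColorLinked G c (S ∪ S') (L ∪ L') u w := by
  obtain ⟨p, hp, hpS, hpL⟩ := h
  obtain ⟨q, hq, hqS, hqL⟩ := h'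
  have hq_nodup : v ∉ q.support.tail ∧ q.support.tail.Nodup := by
    rw [← List.nodup_cons, q.cons_tail_support]
    exact hq.support_nodup
  have hdisj : p.support.Disjoint q.support.tail := by
    intro x hxp hxq
    obtain rfl : x = v := hSS' ⟨hpS x hxp, hqS x (List.mem_of_mem_tail hxq)⟩
    exact hq_nodup.1 hxq
  refine ⟨p.append q, ?_, fun x hx ↦ ?_, ?_⟩
  · rw [Walk.isPath_def, Walk.support_append]
    exact hp.support_nodup.append hq_nodup.2 hdisj
  · exact ((Walk.mem_support_append_iff p q).mp hx).imp (hpS x) (hqS x)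
  · rw [Walk.edgeSet_append, Set.image_union]
    exact Set.union_subset_union hpL hqL

theorem of_injOn_Icc {α : Type*} [LinearOrder α] [Add α] [One α] [SuccAddOrder α]
    [IsSuccArchimedean α] [NoMaxOrder α] {f : α → V} {a b : α} (hab : a ≤ b)
    (hadj : ∀ x ∈ Set.Ico a b, G.Adj (f x) (f (x + 1))) (hinj : Set.InjOn f (Set.Icc a b)) :
    ColorLinked G c (f '' Set.Icc a b) ((fun x ↦ c s(f x, f (x + 1))) '' Set.Ico a b)
      (f a) (f b) := by
  induction hab using Succ.rec with
  | rfl => simpa using refl (Set.mem_singleton (f a))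
  | succ b hab ih =>
    rw [Order.succ_eq_add_one] at hadj hinj ⊢
    have hlt : b < b + 1 := Order.lt_add_one_iff.mpr le_rfl
    have hb := hlt.le
    have hinit := ih (fun x hx ↦ hadj x ⟨hx.1, hx.2.trans_le hb⟩)
      (hinj.mono (Set.Icc_subset_Icc_right hb))
    have hlast : G.Adj (f b) (f (b + 1)) := hadj b ⟨hab, hlt⟩
    refine (hinit.trans (of_adj hlast) ?_).mono ?_ ?_
    · rintro _ ⟨⟨x, hx, rfl⟩, hxb | hxb⟩
      · exact hxb
      · have := hinj ⟨hx.1, hx.2.trans hb⟩ ⟨hab.trans hb, le_rfl⟩ hxb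
        exact absurd this (Order.lt_add_one_iff.mpr hx.2).ne
    · have : b ∈ Set.Icc a (b + 1) := ⟨hab, hb⟩
      grind
    · rintro _ ⟨x, hx, rfl⟩
      rcases (Order.lt_add_one_iff.mp hx.2).lt_or_eq with hxb | rfl
      · exact .inl ⟨x, ⟨hx.1, hxb⟩, rfl⟩
      · exact .inr rfl

theorem comp {κ' : Type*} (f : κ → κ') (h : ColorLinked G c S L u v) :
    ColorLinked G (f ∘ c) S (f '' L) u v := by
  obtain ⟨p, hp, hS, hL⟩ := h
  exact ⟨p, hp, hS, by simpa only [Set.image_comp] using Set.image_mono hL⟩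

end ColorLinked

end ColorLinked

section ColorConnection

variable {V : Type*} {G : SimpleGraph V} {k : ℕ}

theorem isKColorConnecting_of_colorLinked {c : Sym2 V → Fin k}
    (hc : ∀ u v, u ≠ v → ColorLinked G c Set.univ Set.univ u v) :
    G.IsKColorConnecting k (fun e ↦ c e) := by
  intro u v huv
  obtain ⟨p, hp, -, hL⟩ := hc u v huv
  refine ⟨p, hp, ?_⟩
  have hrange : Finset.range k ⊆ (p.edges.map fun e ↦ (c e : ℕ)).toFinset := by
    intro j hj
    obtain ⟨e, he, hej⟩ := hL (Set.mem_univ ⟨j, Finset.mem_range.mp hj⟩)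
    exact List.mem_toFinset.mpr (List.mem_map.mpr ⟨e, he, by rw [hej]⟩)
  simpa using Finset.card_le_card hrange

theorem le_ncard_of_isKColorConnecting [Nontrivial V] {c : Sym2 V → ℕ}
    (hfin : (c '' G.edgeSet).Finite) (hc : G.IsKColorConnecting k c) :
    k ≤ (c '' G.edgeSet).ncard := by
  obtain ⟨u, v, huv⟩ := exists_pair_ne V
  obtain ⟨p, -, hp⟩ := hc u v huv
  refine hp.trans ?_
  rw [← Set.ncard_coe_finset]
  refine Set.ncard_le_ncard (fun j hj ↦ ?_) hfin
  obtain ⟨e, he, rfl⟩ := List.mem_map.mp (List.mem_toFinset.mp hj)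
  exact ⟨e, p.edges_subset_edgeSet he, rfl⟩

theorem ccConn_eq_of_colorLinked [Nontrivial V] (hfin : G.edgeSet.Finite) {c : Sym2 V → Fin k}
    (hc : ∀ u v, u ≠ v → ColorLinked G c Set.univ Set.univ u v) : G.ccConn k = k := by
  have hconn := isKColorConnecting_of_colorLinked hc
  have hle : ((fun e ↦ (c e : ℕ)) '' G.edgeSet).ncard ≤ k := by
    have hsub : (fun e ↦ (c e : ℕ)) '' G.edgeSet ⊆ Finset.range k := by
      rintro _ ⟨e, -, rfl⟩
      simp
    simpa using Set.ncard_le_ncard hsub (Finset.finite_toSet _)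
  have hlower {c' : Sym2 V → ℕ} (hc' : G.IsKColorConnecting k c') :=
    le_ncard_of_isKColorConnecting (hfin.image c') hc'
  refine IsLeast.csInf_eq ⟨⟨_, hconn, hle.antisymm (hlower hconn)⟩, ?_⟩
  rintro _ ⟨c', hc', rfl⟩
  exact hlower hc'

end ColorConnection

/-- Coordinates on a wheel-like graph with rim of length `n` and spokes indexed by `ι`: the rim is
traversed by an `n`-periodic map from `ℤ`, and `spoke i j` is the vertex at distance `j` from the
hub along the `i`-th spoke, meaningful for `j ≤ len i` only. -/
structure WheelChart {V : Type*} (G : SimpleGraph V) (n : ℕ) (ι : Type*) where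
  rim : ℤ → V
  hub : V
  spoke : ι → ℕ → V
  len : ι → ℕ
  three_le : 3 ≤ n
  rim_adj (s : ℤ) : G.Adj (rim s) (rim (s + 1))
  rim_eq_iff {s r : ℤ} : rim s = rim r ↔ s ≡ r [ZMOD n]
  len_pos (i : ι) : 0 < len i
  spoke_zero (i : ι) : spoke i 0 = hub
  spoke_adj {i : ι} {j : ℕ} : j < len i → G.Adj (spoke i j) (spoke i (j + 1))
  eq_of_spoke_eq_spoke {i i' : ι} {j j' : ℕ} : j ≤ len i → j' ≤ len i' →
    spoke i j = spoke i' j' → j = j' ∧ (i = i' ∨ j = 0)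
  eq_of_spoke_eq_rim {i : ι} {j : ℕ} {s : ℤ} : j ≤ len i → spoke i j = rim s → j = len i
  spoke_len_mem_range (i : ι) : spoke i (len i) ∈ Set.range rim
  mem_rim_or_spoke (w : V) : (∃ s, rim s = w) ∨ ∃ i, ∃ j < len i, spoke i j = w

namespace WheelChart

variable {V ι : Type*} {G : SimpleGraph V} {n : ℕ} (W : WheelChart G n ι)

/-- The vertex at which the `i`-th spoke meets the rim. -/
def foot (i : ι) : V := W.spoke i (W.len i)

/-- The vertices of the `i`-th spoke, including the hub and the foot. -/
def spokeSet (i : ι) : Set V := W.spoke i '' Set.Iic (W.len i)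

/-- The spokes whose feet are at rim positions in `[a, b)`. -/
def feetIn (a b : ℤ) : Set ι := {i | ∃ q ∈ Set.Ico a b, W.rim q = W.foot i}

theorem foot_injective : Function.Injective W.foot := fun i _ h ↦
  (W.eq_of_spoke_eq_spoke le_rfl le_rfl h).2.resolve_right (W.len_pos i).ne'

theorem rim_injOn_Ico (a : ℤ) : Set.InjOn W.rim (Set.Ico a (a + n)) := by
  rintro s ⟨has, hsa⟩ r ⟨har, hra⟩ h
  have hdvd : (n : ℤ) ∣ r - s := (W.rim_eq_iff.mp h).dvd
  have : r - s = 0 := Int.eq_zero_of_abs_lt_dvd hdvd (by rw [abs_lt]; omega)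
  omega

theorem disjoint_rim_image_Ico {a b d : ℤ} (hab : a ≤ b) (hbd : b ≤ d) (hda : d ≤ a + n) :
    Disjoint (W.rim '' Set.Ico a b) (W.rim '' Set.Ico b d) := by
  rw [Set.disjoint_iff_inter_eq_empty, ← (W.rim_injOn_Ico a).image_inter
    (Set.Ico_subset_Ico_right (hbd.trans hda)) (Set.Ico_subset_Ico hab hda),
    (Set.Ico_disjoint_Ico_same).inter_eq, Set.image_empty]

theorem exists_mem_Ico_rim_eq (a s : ℤ) : ∃ q ∈ Set.Ico a (a + n), W.rim q = W.rim s := by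
  have hn : (0 : ℤ) < n := by have := W.three_le; omega
  obtain ⟨q, hq, hqn, hmod⟩ := Int.existsUnique_equiv (s - a) hn
  refine ⟨a + q, ⟨by omega, by omega⟩, W.rim_eq_iff.mpr ?_⟩
  simpa using hmod.add_left a

theorem feetIn_add_period (a : ℤ) : W.feetIn a (a + n) = Set.univ := by
  refine Set.eq_univ_of_forall fun i ↦ ?_
  obtain ⟨s, hs⟩ := W.spoke_len_mem_range i
  obtain ⟨q, hq, hqs⟩ := W.exists_mem_Ico_rim_eq a s
  exact ⟨q, hq, hqs.trans hs⟩

theorem feetIn_union_feetIn {a b d : ℤ} (hab : a ≤ b) (hbd : b ≤ d) :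
    W.feetIn a b ∪ W.feetIn b d = W.feetIn a d := by
  ext i
  simp only [feetIn, ← Set.Ico_union_Ico_eq_Ico hab hbd]
  grind

theorem spokeSet_inter_spokeSet_subset {i i' : ι} (h : i ≠ i') :
    W.spokeSet i ∩ W.spokeSet i' ⊆ {W.hub} := by
  rintro _ ⟨⟨j, hj, rfl⟩, j', hj', he⟩
  obtain rfl := (W.eq_of_spoke_eq_spoke hj' hj he).2.resolve_left h.symm
  rw [← he, W.spoke_zero, Set.mem_singleton_iff]

theorem rim_eq_foot_of_mem_spokeSet {s : ℤ} {i : ι} (h : W.rim s ∈ W.spokeSet i) :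
    W.rim s = W.foot i := by
  obtain ⟨j, hj, hjs⟩ := h
  rw [← hjs, foot, ← W.eq_of_spoke_eq_rim hj hjs]

theorem spoke_union_spokeSet_inter_range_rim_subset {m : ι} {j : ℕ} (hj : j < W.len m) (i : ι) :
    (W.spoke m '' Set.Iic j ∪ W.spokeSet i) ∩ Set.range W.rim ⊆ {W.foot i} := by
  rintro _ ⟨⟨q, hq, hqs⟩ | hs, s, rfl⟩
  · exact absurd (W.eq_of_spoke_eq_rim (hq.trans hj.le) hqs) (hq.trans_lt hj).ne
  · exact W.rim_eq_foot_of_mem_spokeSet hs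

theorem spoke_union_spokeSet_union_rim_inter_spoke_subset {i m m' : ι} {j j' : ℕ}
    (hj : j ≤ W.len m) (him' : i ≠ m') (hj' : 0 < j') (hlt : m = m' → j < j') :
    ((W.spoke m '' Set.Iic j ∪ W.spokeSet i) ∪ Set.range W.rim) ∩
      W.spoke m' '' Set.Icc j' (W.len m') ⊆ {W.foot m'} := by
  rintro _ ⟨(⟨q, hq, he⟩ | ⟨q, hq, he⟩) | ⟨s, hs⟩, q', hq', rfl⟩
  · obtain ⟨rfl, hm | rfl⟩ := W.eq_of_spoke_eq_spoke (hq.trans hj) hq'.2 he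
    · exact absurd (hlt hm) (hq'.1.trans hq).not_gt
    · exact absurd hq'.1 hj'.not_ge
  · obtain ⟨rfl, hi | rfl⟩ := W.eq_of_spoke_eq_spoke hq hq'.2 he
    · exact absurd hi him'
    · exact absurd hq'.1 hj'.not_ge
  · obtain rfl := W.eq_of_spoke_eq_rim hq'.2 hs.symm
    exact Set.mem_singleton _

/-- The edge `e` is to receive the color `i`: it lies on the `i`-th spoke, or it is the rim edge
that leaves the foot of that spoke in the positive direction. -/
def ColoredBy (e : Sym2 V) (i : ι) : Prop :=
  (∃ j < W.len i, e = s(W.spoke i j, W.spoke i (j + 1))) ∨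
    ∃ q, W.rim q = W.foot i ∧ e = s(W.rim q, W.rim (q + 1))

/-- The edge-colorings by spokes that make a wheel-like graph color connected. Rim edges that leave
no foot may have any color. -/
def IsSpokeColoring (c : Sym2 V → ι) : Prop := ∀ e i, W.ColoredBy e i → c e = i

theorem spoke_edge_ne_rim_edge {i : ι} {j : ℕ} (hj : j < W.len i) (q r : ℤ) :
    s(W.spoke i j, W.spoke i (j + 1)) ≠ s(W.rim q, W.rim r) := by
  intro he
  have : ∃ x, W.spoke i j = W.rim x := by
    rcases Sym2.eq_iff.mp he with ⟨h, -⟩ | ⟨h, -⟩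
    exacts [⟨_, h⟩, ⟨_, h⟩]
  obtain ⟨x, hx⟩ := this
  exact hj.ne (W.eq_of_spoke_eq_rim hj.le hx)

theorem eq_of_spoke_edge_eq {i i' : ι} {j j' : ℕ} (hj : j < W.len i) (hj' : j' < W.len i')
    (h : s(W.spoke i j, W.spoke i (j + 1)) = s(W.spoke i' j', W.spoke i' (j' + 1))) : i = i' := by
  rcases Sym2.eq_iff.mp h with ⟨-, h⟩ | ⟨-, h⟩
  · exact (W.eq_of_spoke_eq_spoke hj hj' h).2.resolve_right j.succ_ne_zero
  · exact (W.eq_of_spoke_eq_spoke hj hj'.le h).2.resolve_right j.succ_ne_zero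

theorem rim_eq_of_rim_edge_eq {q r : ℤ}
    (h : s(W.rim q, W.rim (q + 1)) = s(W.rim r, W.rim (r + 1))) : W.rim q = W.rim r := by
  rcases Sym2.eq_iff.mp h with ⟨h, -⟩ | ⟨h, h'⟩
  · exact h
  · have htwo : (n : ℤ) ∣ 2 := by
      have htwo_eq : r + 1 - q - (r - (q + 1)) = 2 := by ring
      exact htwo_eq ▸ dvd_sub (W.rim_eq_iff.mp h).dvd (W.rim_eq_iff.mp h').dvd
    have := Int.le_of_dvd two_pos htwo
    have := W.three_le
    omega

variable {W} in
theorem ColoredBy.unique {e : Sym2 V} {i i' : ι} (h : W.ColoredBy e i) (h' : W.ColoredBy e i') :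
    i = i' := by
  rcases h with ⟨j, hj, rfl⟩ | ⟨q, hq, rfl⟩ <;> rcases h' with ⟨j', hj', he⟩ | ⟨r, hr, he⟩
  · exact W.eq_of_spoke_edge_eq hj hj' he
  · exact absurd he (W.spoke_edge_ne_rim_edge hj _ _)
  · exact absurd he.symm (W.spoke_edge_ne_rim_edge hj' _ _)
  · exact W.foot_injective (hq.symm.trans ((W.rim_eq_of_rim_edge_eq he).trans hr))

theorem exists_isSpokeColoring [Nonempty ι] : ∃ c, W.IsSpokeColoring c :=
  ⟨fun e ↦ Classical.epsilon (W.ColoredBy e), fun _ i h ↦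
    (Classical.epsilon_spec ⟨i, h⟩).unique h⟩

section Linking

variable {W} {c : Sym2 V → ι}

theorem colorLinked_rim (hc : W.IsSpokeColoring c) {a b : ℤ} (hab : a ≤ b) (hba : b < a + n) :
    ColorLinked G c (W.rim '' Set.Icc a b) (W.feetIn a b) (W.rim a) (W.rim b) := by
  have hinj : Set.InjOn W.rim (Set.Icc a b) :=
    (W.rim_injOn_Ico a).mono (Set.Icc_subset_Ico_right hba)
  refine (ColorLinked.of_injOn_Icc hab (fun x _ ↦ W.rim_adj x) hinj).mono le_rfl ?_
  rintro i ⟨q, hq, hqi⟩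
  exact ⟨q, hq, hc _ i (.inr ⟨q, hqi, rfl⟩)⟩

theorem colorLinked_spoke (hc : W.IsSpokeColoring c) {i : ι} {j j' : ℕ} (hjj' : j ≤ j')
    (hj' : j' ≤ W.len i) :
    ColorLinked G c (W.spoke i '' Set.Icc j j') {l | l = i ∧ j < j'}
      (W.spoke i j) (W.spoke i j') := by
  have hinj : Set.InjOn (W.spoke i) (Set.Icc j j') := fun x hx y hy h ↦
    (W.eq_of_spoke_eq_spoke (hx.2.trans hj') (hy.2.trans hj') h).1
  have hadj (x) (hx : x ∈ Set.Ico j j') := W.spoke_adj (i := i) (hx.2.trans_le hj')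
  refine (ColorLinked.of_injOn_Icc hjj' hadj hinj).mono le_rfl ?_
  rintro l ⟨rfl, hlt⟩
  exact ⟨j, ⟨le_rfl, hlt⟩, hc _ l (.inl ⟨j, hlt.trans_le hj', rfl⟩)⟩

theorem colorLinked_hub_foot (hc : W.IsSpokeColoring c) (i : ι) :
    ColorLinked G c (W.spokeSet i) {i} W.hub (W.foot i) := by
  rw [← W.spoke_zero i]
  refine (colorLinked_spoke hc (Nat.zero_le _) le_rfl).mono
    (Set.image_mono Set.Icc_subset_Iic_self) ?_
  simpa using W.len_pos i

theorem colorLinked_foot_foot (hc : W.IsSpokeColoring c) {i i' : ι} (h : i ≠ i') :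
    ColorLinked G c (W.spokeSet i ∪ W.spokeSet i') {i, i'} (W.foot i) (W.foot i') :=
  (colorLinked_hub_foot hc i).symm.trans (colorLinked_hub_foot hc i')
    (W.spokeSet_inter_spokeSet_subset h)

theorem colorLinked_spoke_foot (hc : W.IsSpokeColoring c) {m : ι} {j : ℕ} (hj : j < W.len m)
    (i : ι) :
    ColorLinked G c (W.spoke m '' Set.Iic j ∪ W.spokeSet i) {i} (W.spoke m j) (W.foot i) := by
  by_cases hmi : m = i
  · subst hmi
    refine (colorLinked_spoke hc hj.le le_rfl).mono ?_ ?_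
    · exact Set.subset_union_of_subset_right (Set.image_mono Set.Icc_subset_Iic_self) _
    · simpa using hj
  · have hin := (colorLinked_spoke hc (Nat.zero_le j) hj.le).symm
    rw [W.spoke_zero] at hin
    have hsub : W.spoke m '' Set.Icc 0 j ⊆ W.spokeSet m :=
      Set.image_mono fun x hx ↦ hx.2.trans hj.le
    refine (hin.trans (colorLinked_hub_foot hc i) ?_).mono ?_ Set.subset_union_right
    · exact (Set.inter_subset_inter_left _ hsub).trans (W.spokeSet_inter_spokeSet_subset hmi)
    · exact Set.union_subset_union_left _ (Set.image_mono Set.Icc_subset_Iic_self)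

theorem exists_colorLinked_rim_foot (hc : W.IsSpokeColoring c) {a b : ℤ}
    (hne : (W.feetIn a b).Nonempty) (hba : b ≤ a + n) :
    ∃ i ∈ W.feetIn a b,
      ColorLinked G c (W.rim '' Set.Ico a b) (W.feetIn a b \ {i}) (W.rim a) (W.foot i) := by
  obtain ⟨i₀, q₀, hq₀, hi₀⟩ := hne
  obtain ⟨r, ⟨hr, i, hri⟩, hlast⟩ := Int.exists_greatest_of_bdd
    (P := fun q ↦ q ∈ Set.Ico a b ∧ ∃ i, W.rim q = W.foot i)
    ⟨b, fun q hq ↦ hq.1.2.le⟩ ⟨q₀, hq₀, i₀, hi₀⟩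
  refine ⟨i, ⟨r, hr, hri⟩, ?_⟩
  rw [← hri]
  refine (colorLinked_rim hc hr.1 (hr.2.trans_le hba)).mono
    (Set.image_mono (Set.Icc_subset_Ico_right hr.2)) ?_
  rintro l ⟨⟨q, hq, hql⟩, hli⟩
  have hqr : q ≠ r := by
    rintro rfl
    exact hli (W.foot_injective (hql.symm.trans hri))
  exact ⟨q, ⟨hq.1, (hlast q ⟨hq, l, hql⟩).lt_of_ne hqr⟩, hql⟩

theorem exists_colorLinked_rim_foot_compl [Nonempty ι] (hc : W.IsSpokeColoring c) (s : ℤ) :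
    ∃ i, ColorLinked G c (Set.range W.rim) {i}ᶜ (W.rim s) (W.foot i) := by
  have hfeet := W.feetIn_add_period s
  obtain ⟨i, -, h⟩ := exists_colorLinked_rim_foot hc (hfeet ▸ Set.univ_nonempty) le_rfl
  rw [hfeet, ← Set.compl_eq_univ_sdiff] at h
  exact ⟨i, h.mono (Set.image_subset_range _ _) le_rfl⟩

theorem colorLinked_rim_rim_of_nonempty (hc : W.IsSpokeColoring c) {a b d : ℤ} (hab : a ≤ b)
    (hbd : b ≤ d) (hda : d ≤ a + n) (hne : (W.feetIn a b).Nonempty)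
    (hne' : (W.feetIn b d).Nonempty) :
    ColorLinked G c Set.univ (W.feetIn a d) (W.rim a) (W.rim b) := by
  obtain ⟨i, hi, harc⟩ := exists_colorLinked_rim_foot hc hne (hbd.trans hda)
  obtain ⟨i', hi', harc'⟩ := exists_colorLinked_rim_foot hc hne' (by omega)
  have hdisj := W.disjoint_rim_image_Ico hab hbd hda
  have hfoot : W.foot i ∈ W.rim '' Set.Ico a b := hi
  have hfoot' : W.foot i' ∈ W.rim '' Set.Ico b d := hi'
  have hii' : i ≠ i' := by
    rintro rfl
    exact hdisj.notMem_of_mem_left hfoot hfoot'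
  have hrim (x : ℤ) (hx : W.rim x ∈ W.spokeSet i ∪ W.spokeSet i') :
      W.rim x = W.foot i ∨ W.rim x = W.foot i' :=
    hx.imp W.rim_eq_foot_of_mem_spokeSet W.rim_eq_foot_of_mem_spokeSet
  refine ((harc.trans (colorLinked_foot_foot hc hii') ?_).trans harc'.symm ?_).mono
    (Set.subset_univ _) ?_
  · rintro _ ⟨⟨x, hx, rfl⟩, hxS⟩
    refine (hrim x hxS).resolve_right fun hxi' ↦ ?_
    exact hdisj.notMem_of_mem_left (hxi' ▸ Set.mem_image_of_mem W.rim hx) hfoot'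
  · rintro _ ⟨hxS | hxS, x, hx, rfl⟩
    · exact absurd (Set.mem_image_of_mem W.rim hx) (hdisj.notMem_of_mem_left hxS)
    · refine (hrim x hxS).resolve_left fun hxi ↦ ?_
      exact hdisj.notMem_of_mem_left hfoot (hxi ▸ Set.mem_image_of_mem W.rim hx)
  · rw [← W.feetIn_union_feetIn hab hbd]
    grind

theorem colorLinked_rim_rim_of_lt (hc : W.IsSpokeColoring c) {s r : ℤ} (hsr : s < r)
    (hrs : r < s + n) :
    ColorLinked G c Set.univ Set.univ (W.rim s) (W.rim r) := by
  have hperiod : W.rim (s + n) = W.rim s := W.rim_eq_iff.mpr (by simp [Int.ModEq])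
  have hfeet : W.feetIn s r ∪ W.feetIn r (s + n) = Set.univ := by
    rw [W.feetIn_union_feetIn hsr.le hrs.le, W.feetIn_add_period]
  rcases (W.feetIn s r).eq_empty_or_nonempty with hempty | hne
  · have h := colorLinked_rim hc hrs.le (by omega)
    rw [hempty, Set.empty_union] at hfeet
    rw [hfeet, hperiod] at h
    exact h.symm.mono (Set.subset_univ _) le_rfl
  rcases (W.feetIn r (s + n)).eq_empty_or_nonempty with hempty | hne'
  · have h := colorLinked_rim hc hsr.le hrs
    rw [hempty, Set.union_empty] at hfeet
    rw [hfeet] at h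
    exact h.mono (Set.subset_univ _) le_rfl
  have h := colorLinked_rim_rim_of_nonempty hc hsr.le hrs.le le_rfl hne hne'
  rwa [W.feetIn_add_period] at h

theorem colorLinked_rim_rim (hc : W.IsSpokeColoring c) {s r : ℤ} (h : W.rim s ≠ W.rim r) :
    ColorLinked G c Set.univ Set.univ (W.rim s) (W.rim r) := by
  obtain ⟨q, hq, hqr⟩ := W.exists_mem_Ico_rim_eq s r
  rw [← hqr] at h ⊢
  exact colorLinked_rim_rim_of_lt hc (hq.1.lt_of_ne fun hsq ↦ h (by rw [hsq])) hq.2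

theorem colorLinked_spoke_rim (hc : W.IsSpokeColoring c) {m : ι} {j : ℕ} (hj : j < W.len m)
    (s : ℤ) :
    ColorLinked G c Set.univ Set.univ (W.spoke m j) (W.rim s) := by
  have : Nonempty ι := ⟨m⟩
  obtain ⟨i, harc⟩ := exists_colorLinked_rim_foot_compl hc s
  exact ((colorLinked_spoke_foot hc hj i).trans harc.symm
    (W.spoke_union_spokeSet_inter_range_rim_subset hj i)).mono (Set.subset_univ _) (by simp)

theorem colorLinked_spoke_spoke_of_le (hc : W.IsSpokeColoring c) {m m' : ι} {j j' : ℕ}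
    (hj : j < W.len m) (hj' : j' < W.len m') (hjj' : j ≤ j')
    (hne : W.spoke m j ≠ W.spoke m' j') :
    ColorLinked G c Set.univ Set.univ (W.spoke m j) (W.spoke m' j') := by
  have : Nonempty ι := ⟨m⟩
  have hj'_pos : 0 < j' := by
    by_contra! h
    obtain ⟨rfl, rfl⟩ : j = 0 ∧ j' = 0 := by omega
    exact hne (by rw [W.spoke_zero, W.spoke_zero])
  have hlt (hmm' : m = m') : j < j' := hjj'.lt_of_ne fun h ↦ hne (by rw [hmm', h])
  obtain ⟨s, hs⟩ := W.spoke_len_mem_range m'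
  obtain ⟨i, harc⟩ := exists_colorLinked_rim_foot_compl hc s
  rw [hs] at harc
  by_cases him' : i = m'
  · subst him'
    have honly (l : ι) : l = i := by simpa using Set.ext_iff.mp harc.eq_empty l
    obtain rfl := honly m
    exact (colorLinked_spoke hc hjj' hj'.le).mono (Set.subset_univ _)
      fun l _ ↦ ⟨honly l, hlt rfl⟩
  · exact (((colorLinked_spoke_foot hc hj i).trans harc.symm
      (W.spoke_union_spokeSet_inter_range_rim_subset hj i)).trans
      (colorLinked_spoke hc hj'.le le_rfl).symm
      (W.spoke_union_spokeSet_union_rim_inter_spoke_subset hj.le him' hj'_pos hlt)).mono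
      (Set.subset_univ _) (by simp)

theorem colorLinked_of_ne (hc : W.IsSpokeColoring c) {u v : V} (huv : u ≠ v) :
    ColorLinked G c Set.univ Set.univ u v := by
  rcases W.mem_rim_or_spoke u with ⟨s, rfl⟩ | ⟨m, j, hj, rfl⟩ <;>
    rcases W.mem_rim_or_spoke v with ⟨r, rfl⟩ | ⟨m', j', hj', rfl⟩
  · exact colorLinked_rim_rim hc huv
  · exact (colorLinked_spoke_rim hc hj' s).symm
  · exact colorLinked_spoke_rim hc hj r
  · rcases le_total j j' with h | h
    · exact colorLinked_spoke_spoke_of_le hc hj hj' h huv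
    · exact (colorLinked_spoke_spoke_of_le hc hj' hj h huv.symm).symm

end Linking

end WheelChart

section CycleVertex

variable {V : Type*} {G : SimpleGraph V} {x : V} {c : G.Walk x x}

/-- The vertices of a closed walk, extended periodically to all integer positions. -/
def cycleVert (c : G.Walk x x) (s : ℤ) : V := c.getVert (s % c.length).toNat

theorem cycleVert_natCast {j : ℕ} (hj : j ≤ c.length) : cycleVert c j = c.getVert j := by
  rcases hj.eq_or_lt with rfl | hlt
  · simp [cycleVert]
  · rw [cycleVert, ← Int.natCast_mod, Int.toNat_natCast, Nat.mod_eq_of_lt hlt]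

theorem cycleVert_congr {s r : ℤ} (h : s ≡ r [ZMOD c.length]) : cycleVert c s = cycleVert c r := by
  rw [cycleVert, h, cycleVert]

theorem mem_support_iff_exists_cycleVert {w : V} : w ∈ c.support ↔ ∃ s, cycleVert c s = w := by
  rw [Walk.mem_support_iff_exists_getVert]
  constructor
  · rintro ⟨j, rfl, hj⟩
    exact ⟨j, cycleVert_natCast hj⟩
  · rintro ⟨s, rfl⟩
    exact Walk.mem_support_iff_exists_getVert.mp (c.getVert_mem_support _)

theorem adj_cycleVert_add_one (hc : ¬c.Nil) (s : ℤ) :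
    G.Adj (cycleVert c s) (cycleVert c (s + 1)) := by
  have hlen : (0 : ℤ) < c.length := by
    exact_mod_cast Walk.not_nil_iff_lt_length.mp hc
  have hlt : (s % c.length).toNat < c.length := by
    have := Int.emod_lt_of_pos s hlen
    omega
  have hmod : ((s % c.length).toNat : ℤ) ≡ s [ZMOD c.length] := by
    rw [Int.toNat_of_nonneg (Int.emod_nonneg s hlen.ne')]
    exact Int.mod_modEq s _
  rw [← cycleVert_congr hmod, ← cycleVert_congr (hmod.add_right 1), ← Nat.cast_add_one,
    cycleVert_natCast hlt.le, cycleVert_natCast hlt]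
  exact c.adj_getVert_succ hlt

theorem cycleVert_eq_iff (hc : c.IsCycle) {s r : ℤ} :
    cycleVert c s = cycleVert c r ↔ s ≡ r [ZMOD c.length] := by
  refine ⟨fun h ↦ ?_, cycleVert_congr⟩
  have hlen : (0 : ℤ) < c.length := by have := hc.three_le_length; omega
  have hmem (q : ℤ) : (q % c.length).toNat ≤ c.length - 1 := by
    have := Int.emod_lt_of_pos q hlen
    omega
  have htoNat := hc.getVert_injOn' (hmem s) (hmem r) h
  have := Int.emod_nonneg s hlen.ne'
  have := Int.emod_nonneg r hlen.ne'
  unfold Int.ModEq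
  omega

end CycleVertex

section IsWheelLike

variable {V : Type*} {G : SimpleGraph V} {n t : ℕ}

theorem finite_of_isWheelLike (h : G.IsWheelLike n t) : Finite V := by
  obtain ⟨v₀, x, c, -, -, a, -, -, p, -, -, -, -, hverts, -⟩ := h
  have hcover : Set.univ ⊆ {w | w ∈ c.support} ∪ ⋃ i, {w | w ∈ (p i).support} := fun w _ ↦
    (hverts w).imp id Set.mem_iUnion.mpr
  exact Set.finite_univ_iff.mp <| ((List.finite_toSet _).union
    (Set.finite_iUnion fun i ↦ List.finite_toSet _)).subset hcover

theorem eq_zero_of_getVert_eq_getVert {u v w : V} {p : G.Walk u v} {q : G.Walk u w}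
    (hp : p.IsPath) (hq : q.IsPath) (hpq : ∀ x ∈ p.support, x ∈ q.support → x = u) {j j' : ℕ}
    (hj : j ≤ p.length) (hj' : j' ≤ q.length) (h : p.getVert j = q.getVert j') :
    j = 0 ∧ j' = 0 := by
  have hu := hpq _ (p.getVert_mem_support j) (h ▸ q.getVert_mem_support j')
  exact ⟨(hp.getVert_eq_start_iff hj).mp hu, (hq.getVert_eq_start_iff hj').mp (h ▸ hu)⟩

theorem nonempty_wheelChart_of_isWheelLike (h : G.IsWheelLike n t) :
    Nonempty (WheelChart G n (Fin t)) := by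
  obtain ⟨v₀, x, c, hc, rfl, a, -, haC, p, hp, hv₀, hint, hdisj, hverts, -⟩ := h
  have hrim (s : ℤ) : cycleVert c s ∈ c.support := mem_support_iff_exists_cycleVert.mpr ⟨s, rfl⟩
  have hfoot (i) : (p i).getVert (p i).length ∈ c.support := by simpa using haC i
  refine ⟨{
    rim := cycleVert c
    hub := v₀
    spoke := fun i ↦ (p i).getVert
    len := fun i ↦ (p i).length
    three_le := hc.three_le_length
    rim_adj := adj_cycleVert_add_one hc.not_nil
    rim_eq_iff := cycleVert_eq_iff hc
    len_pos := fun i ↦ ?_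
    spoke_zero := fun i ↦ (p i).getVert_zero
    spoke_adj := fun hj ↦ (p _).adj_getVert_succ hj
    eq_of_spoke_eq_spoke := ?_
    eq_of_spoke_eq_rim := ?_
    spoke_len_mem_range := fun i ↦ mem_support_iff_exists_cycleVert.mp (hfoot i)
    mem_rim_or_spoke := fun w ↦ ?_ }⟩
  · refine Nat.pos_of_ne_zero fun h ↦ hv₀ ?_
    simpa [h] using hfoot i
  · intro i i' j j' hj hj' he
    by_cases hii' : i = i'
    · subst hii'
      exact ⟨(hp i).getVert_injOn hj hj' he, .inl rfl⟩
    obtain ⟨hj0, hj0'⟩ := eq_zero_of_getVert_eq_getVert (hp i) (hp i') (hdisj i i' hii') hj hj' he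
    exact ⟨hj0.trans hj0'.symm, .inr hj0⟩
  · intro i j s hj he
    refine ((hp i).getVert_eq_end_iff hj).mp ?_
    have hmem : (p i).getVert j ∈ c.support := he ▸ hrim s
    by_contra hne
    exact hint i _ ((p i).getVert_mem_support j) (fun h ↦ hv₀ (h ▸ hmem)) hne hmem
  · by_cases hw : w ∈ c.support
    · exact .inl (mem_support_iff_exists_cycleVert.mp hw)
    obtain ⟨i, hi⟩ := (hverts w).resolve_left hw
    obtain ⟨j, rfl, hj⟩ := Walk.mem_support_iff_exists_getVert.mp hi
    refine .inr ⟨i, j, hj.lt_of_ne ?_, rfl⟩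
    rintro rfl
    exact hw (hfoot i)

end IsWheelLike

theorem stmt_10_general {V : Type*} (G : SimpleGraph V) (n t k : ℕ)
    (hk : 1 ≤ k) (hkt : k ≤ t) (h : G.IsWheelLike n t) :
    G.KColorConnectable k ∧ G.ccConn k = k := by
  obtain ⟨W⟩ := nonempty_wheelChart_of_isWheelLike h
  have : Finite V := finite_of_isWheelLike h
  have : Nontrivial V := ⟨_, _, (W.rim_adj 0).ne⟩
  have : Nonempty (Fin k) := ⟨0, hk⟩
  have : Nonempty (Fin t) := ⟨0, hk.trans hkt⟩
  obtain ⟨c, hc⟩ := W.exists_isSpokeColoring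
  obtain ⟨f, hf⟩ : ∃ f : Fin t → Fin k, Function.Surjective f :=
    ⟨_, Function.invFun_surjective (Fin.castLE_injective hkt)⟩
  have hlinked (u v : V) (huv : u ≠ v) : ColorLinked G (f ∘ c) Set.univ Set.univ u v := by
    simpa only [Set.image_univ, hf.range_eq] using (W.colorLinked_of_ne hc huv).comp f
  exact ⟨⟨_, isKColorConnecting_of_colorLinked hlinked⟩,
    ccConn_eq_of_colorLinked G.edgeSet.toFinite hlinked⟩

theorem stmt_10 {V : Type*} (G : SimpleGraph V) (n t k : ℕ)
    (hk : 3 ≤ k) (hkt : k ≤ t) (htn : t ≤ n) (h : G.IsWheelLike n t) :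
    G.KColorConnectable k ∧ G.ccConn k = k :=
  stmt_10_general G n t k (by omega) hkt h
end
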